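/- arXiv:2309.10384 — 6 statements merged into one kernel-verified Lean document; each statement's English description precedes it below -/
import Mathlib

section
/- Let a ∈ C¹([0,∞)) satisfy: (1) a′(s) > 0 for s > 0; (2) for each t > 0 the function s ↦ (a′(t) − a′(s))/√(a(t) − a(s)) is monotonically decreasing on [0,t). Let v : [0,∞) → ℝ be C¹, and define (Rw)(t) = ∫_0^t (a′(s)/2) (a(t) − a(s))^{−1/2} w(s) ds for continuous w. Then for every t > 0, Rv is differentiable at t and |(Rv)′(t)| ≤ (a′(t)/2)(a(t) − a(0))^{−1/2} |v(t)| + (R|v′|)(t). -/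
open MeasureTheory intervalIntegral

/-- The Abel-type integral operator `(Rw)(t) = ∫_0^t (a'(s)/2) (a(t) - a(s))^{-1/2} w(s) ds`. -/
noncomputable def Rop (a a' : ℝ → ℝ) (w : ℝ → ℝ) (t : ℝ) : ℝ :=
  ∫ s in (0 : ℝ)..t, (a' s / 2) * (a t - a s) ^ (-(1 / 2) : ℝ) * w s

open Set Filter Topology

/-- A Lipschitz-type bound based at `y ≠ 0` for the square root extended by zero to the negative half-line. -/
theorem abs_sqrt_sub_sqrt_le (x : ℝ) {y : ℝ} (hy : y ≠ 0) :
    |√x - √y| ≤ |x - y| * (√|y|)⁻¹ := by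
  have hy' : 0 < √|y| := Real.sqrt_pos.2 (abs_pos.2 hy)
  rw [← div_eq_mul_inv, le_div_iff₀ hy']
  rcases lt_or_gt_of_ne hy with hneg | hpos
  · rw [Real.sqrt_eq_zero_of_nonpos hneg.le, sub_zero, abs_of_nonneg (Real.sqrt_nonneg x)]
    rcases le_total x 0 with hx | hx
    · rw [Real.sqrt_eq_zero_of_nonpos hx, zero_mul]
      exact abs_nonneg _
    · rw [abs_of_neg hneg, abs_of_nonneg (by linarith)]
      nlinarith [Real.sq_sqrt hx, Real.sq_sqrt (neg_pos.2 hneg).le, sq_nonneg (√x - √(-y)),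
        sq_nonneg (√x), sq_nonneg (√(-y))]
  · rw [abs_of_pos hpos]
    rw [abs_of_pos hpos] at hy'
    rcases le_total x 0 with hx | hx
    · rw [Real.sqrt_eq_zero_of_nonpos hx, zero_sub, abs_neg, abs_of_pos hy',
        Real.mul_self_sqrt hpos.le, abs_of_nonpos (by linarith)]
      linarith
    · have h : x - y = (√x - √y) * (√x + √y) := by
        nlinarith [Real.sq_sqrt hx, Real.sq_sqrt hpos.le]
      rw [h, abs_mul]
      gcongr
      rw [abs_of_nonneg (by positivity)]
      linarith [Real.sqrt_nonneg x]

theorem rpow_neg_half_eq_inv_sqrt {x : ℝ} (hx : 0 ≤ x) : x ^ (-(1 / 2) : ℝ) = (√x)⁻¹ := by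
  rw [Real.rpow_neg hx, ← Real.sqrt_eq_rpow]

theorem intervalIntegrable_inv_sqrt_abs_sub (t b c : ℝ) :
    IntervalIntegrable (fun s => (√|t - s|)⁻¹) volume b c := by
  have h0 : ∀ d : ℝ, 0 ≤ d → IntervalIntegrable (fun x : ℝ => (√|x|)⁻¹) volume 0 d := by
    intro d hd
    refine (intervalIntegrable_rpow' (r := -(1 / 2)) (by norm_num)).congr fun x hx => ?_
    rw [uIoc_of_le hd] at hx
    simp only [abs_of_pos hx.1]
    exact rpow_neg_half_eq_inv_sqrt hx.1.le
  have h1 : ∀ d : ℝ, IntervalIntegrable (fun x : ℝ => (√|x|)⁻¹) volume 0 d := by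
    intro d
    rcases le_total 0 d with hd | hd
    · exact h0 d hd
    · rw [IntervalIntegrable.iff_comp_neg]
      simpa using h0 (-d) (by linarith)
  have h2 := ((h1 (t - b)).symm.trans (h1 (t - c))).comp_sub_left t
  simpa using h2

/-- Differentiation under the integral sign at `x₀` when the difference quotients based at `x₀`
are dominated by an integrable function. -/
theorem hasDerivAt_integral_of_dominated_slope {μ : Measure ℝ} {F : ℝ → ℝ → ℝ} {F' bound : ℝ → ℝ}
    {x₀ : ℝ} {S : Set ℝ} (hS : S ∈ 𝓝 x₀)
    (hF_meas : ∀ x ∈ S, AEStronglyMeasurable (F x) μ) (hF_int : Integrable (F x₀) μ)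
    (hF'_meas : AEStronglyMeasurable F' μ)
    (h_lip : ∀ᵐ s ∂μ, ∀ x ∈ S, ‖F x s - F x₀ s‖ ≤ bound s * ‖x - x₀‖)
    (bound_integrable : Integrable bound μ)
    (h_diff : ∀ᵐ s ∂μ, HasDerivAt (F · s) (F' s) x₀) :
    Integrable F' μ ∧ HasDerivAt (fun x => ∫ s, F x s ∂μ) (∫ s, F' s ∂μ) x₀ := by
  set L : ℝ →L[ℝ] ℝ →L[ℝ] ℝ := ContinuousLinearMap.smulRightL ℝ ℝ ℝ 1
  replace h_diff : ∀ᵐ s ∂μ, HasFDerivAt (F · s) (L (F' s)) x₀ :=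
    h_diff.mono fun x hx ↦ hx.hasFDerivAt
  have hm : AEStronglyMeasurable (L ∘ F') μ := L.continuous.comp_aestronglyMeasurable hF'_meas
  obtain ⟨hF'_int, key⟩ := hasFDerivAt_integral_of_dominated_loc_of_lip'
    hS hF_meas hF_int hm h_lip bound_integrable h_diff
  replace hF'_int : Integrable F' μ := by
    rw [← integrable_norm_iff hm] at hF'_int
    rw [← integrable_norm_iff hF'_meas]
    simpa [L, (· ∘ ·)] using! hF'_int
  refine ⟨hF'_int, ?_⟩
  simp_rw [hasDerivAt_iff_hasFDerivAt] at h_diff ⊢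
  simpa only [(· ∘ ·), ContinuousLinearMap.integral_comp_comm _ hF'_int] using! key

section AbelOperator

variable {a a' v v' : ℝ → ℝ}

theorem strictMonoOn_Ici_of_hasDerivAt_pos (ha : ∀ s ∈ Ici (0 : ℝ), HasDerivAt a (a' s) s)
    (hapos : ∀ s : ℝ, 0 < s → 0 < a' s) : StrictMonoOn a (Ici 0) := by
  refine strictMonoOn_of_deriv_pos (convex_Ici 0)
    (fun s hs => (ha s hs).continuousAt.continuousWithinAt) fun s hs => ?_
  rw [interior_Ici] at hs
  rw [(ha s (mem_Ioi.1 hs).le).deriv]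
  exact hapos s hs

theorem exists_mul_abs_sub_le_abs_sub (ha : ∀ s ∈ Ici (0 : ℝ), HasDerivAt a (a' s) s)
    (ha' : ContinuousOn a' (Ici 0)) (hapos : ∀ s : ℝ, 0 < s → 0 < a' s) {t : ℝ} (ht : 0 < t) :
    ∃ c > 0, ∀ s ∈ Icc 0 (2 * t), c * |t - s| ≤ |a t - a s| := by
  have hmono := strictMonoOn_Ici_of_hasDerivAt_pos ha hapos
  have hsub : Icc (t / 2) (2 * t) ⊆ Ici 0 := fun s hs => by
    have := hs.1
    simp only [mem_Ici]
    linarith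
  obtain ⟨m, hm, hmin⟩ := isCompact_Icc.exists_isMinOn
    (nonempty_Icc.2 (by linarith : t / 2 ≤ 2 * t)) (ha'.mono hsub)
  have hm0 : 0 < a' m := hapos m (by linarith [hm.1])
  have hmv : ∀ x ∈ Icc (t / 2) (2 * t), ∀ y ∈ Icc (t / 2) (2 * t), x ≤ y →
      a' m * (y - x) ≤ a y - a x := by
    refine (convex_Icc _ _).mul_sub_le_image_sub_of_le_deriv
      (fun s hs => (ha s (hsub hs)).continuousAt.continuousWithinAt)
      (fun s hs => (ha s (hsub (interior_subset hs))).differentiableAt.differentiableWithinAt)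
      fun s hs => ?_
    rw [(ha s (hsub (interior_subset hs))).deriv]
    exact hmin (interior_subset hs)
  have htI : t ∈ Icc (t / 2) (2 * t) := ⟨by linarith, by linarith⟩
  refine ⟨a' m / 2, by positivity, fun s hs => ?_⟩
  rcases le_total t s with hts | hst
  · have h := hmv t htI s ⟨by linarith, hs.2⟩ hts
    have h0 : 0 ≤ a' m * (s - t) := mul_nonneg hm0.le (by linarith)
    rw [abs_of_nonpos (by linarith), abs_of_nonpos (by linarith)]
    nlinarith
  · have h0 : 0 ≤ a' m * (t - s) := mul_nonneg hm0.le (by linarith)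
    refine le_trans ?_ (le_abs_self _)
    rw [abs_of_nonneg (by linarith)]
    rcases le_total (t / 2) s with h2 | h2
    · have h := hmv s ⟨h2, hs.2⟩ t htI hst
      nlinarith
    · have h := hmv (t / 2) ⟨le_rfl, by linarith⟩ t htI (by linarith)
      have h3 := hmono.monotoneOn (mem_Ici.2 hs.1) (mem_Ici.2 (by linarith : 0 ≤ t / 2)) h2
      nlinarith [mul_nonneg hm0.le hs.1]

theorem intervalIntegrable_inv_sqrt_abs_image_sub
    (ha : ∀ s ∈ Ici (0 : ℝ), HasDerivAt a (a' s) s)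
    (ha' : ContinuousOn a' (Ici 0)) (hapos : ∀ s : ℝ, 0 < s → 0 < a' s) {t : ℝ} (ht : 0 < t) :
    IntervalIntegrable (fun s => (√|a t - a s|)⁻¹) volume 0 (2 * t) := by
  obtain ⟨c, hc, hle⟩ := exists_mul_abs_sub_le_abs_sub ha ha' hapos ht
  refine ((intervalIntegrable_inv_sqrt_abs_sub t 0 (2 * t)).const_mul (√c)⁻¹).mono_fun' ?_ ?_
  · rw [uIoc_of_le (by linarith)]
    have hcont : ContinuousOn (fun s => √|a t - a s|) (Ioc 0 (2 * t)) := fun s hs =>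
      ((continuousAt_const.sub (ha s hs.1.le).continuousAt).abs.sqrt).continuousWithinAt
    exact (hcont.aemeasurable measurableSet_Ioc).inv.aestronglyMeasurable
  · rw [uIoc_of_le (by linarith)]
    have hne : ∀ᵐ s ∂(volume.restrict (Ioc 0 (2 * t))), s ≠ t :=
      ae_restrict_of_ae (Measure.ae_ne volume t)
    filter_upwards [hne, ae_restrict_mem measurableSet_Ioc] with s hst hs
    have hpos : 0 < |t - s| := abs_pos.2 (sub_ne_zero.2 hst.symm)
    rw [Real.norm_of_nonneg (by positivity), ← mul_inv, ← Real.sqrt_mul hc.le]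
    exact inv_anti₀ (Real.sqrt_pos.2 (by positivity)) (Real.sqrt_le_sqrt (hle s ⟨hs.1.le, hs.2⟩))

theorem intervalIntegrable_inv_sqrt_image_sub_mul
    (ha : ∀ s ∈ Ici (0 : ℝ), HasDerivAt a (a' s) s)
    (ha' : ContinuousOn a' (Ici 0)) (hapos : ∀ s : ℝ, 0 < s → 0 < a' s) {t : ℝ} (ht : 0 < t)
    {w : ℝ → ℝ} (hw : ContinuousOn w (Ici 0)) :
    IntervalIntegrable (fun s => (√(a t - a s))⁻¹ * w s) volume 0 t := by
  have hmono := strictMonoOn_Ici_of_hasDerivAt_pos ha hapos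
  have h := (intervalIntegrable_inv_sqrt_abs_image_sub ha ha' hapos ht).mono_set
    (c := 0) (d := t) (by
      rw [uIcc_of_le ht.le, uIcc_of_le (by linarith)]
      exact Icc_subset_Icc_right (by linarith))
  have h2 : IntervalIntegrable (fun s => (√(a t - a s))⁻¹) volume 0 t := by
    refine h.congr fun s hs => ?_
    rw [uIoc_of_le ht.le] at hs
    have := hmono.monotoneOn (mem_Ici.2 hs.1.le) (mem_Ici.2 ht.le) hs.2
    simp only [abs_of_nonneg (sub_nonneg.2 this)]
  refine h2.mul_continuousOn (hw.mono ?_)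
  rw [uIcc_of_le ht.le]
  exact Icc_subset_Ici_self

theorem Rop_eq_integral_inv_sqrt (ha : ∀ s ∈ Ici (0 : ℝ), HasDerivAt a (a' s) s)
    (hapos : ∀ s : ℝ, 0 < s → 0 < a' s) {t : ℝ} (ht : 0 < t) (w : ℝ → ℝ) :
    Rop a a' w t = ∫ s in (0 : ℝ)..t, (√(a t - a s))⁻¹ * (a' s / 2 * w s) := by
  have hmono := strictMonoOn_Ici_of_hasDerivAt_pos ha hapos
  refine integral_congr fun s hs => ?_
  rw [uIcc_of_le ht.le] at hs
  have := hmono.monotoneOn (mem_Ici.2 hs.1) (mem_Ici.2 ht.le) hs.2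
  simp only [rpow_neg_half_eq_inv_sqrt (sub_nonneg.2 this)]
  ring

/-- Integration by parts removes the singularity of the kernel. -/
theorem Rop_eq_add_integral_sqrt (ha : ∀ s ∈ Ici (0 : ℝ), HasDerivAt a (a' s) s)
    (ha' : ContinuousOn a' (Ici 0)) (hapos : ∀ s : ℝ, 0 < s → 0 < a' s)
    (hv : ∀ s ∈ Ici (0 : ℝ), HasDerivAt v (v' s) s) (hv' : ContinuousOn v' (Ici 0))
    {t : ℝ} (ht : 0 < t) :
    Rop a a' v t = √(a t - a 0) * v 0 + ∫ s in (0 : ℝ)..t, √(a t - a s) * v' s := by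
  have hmono := strictMonoOn_Ici_of_hasDerivAt_pos ha hapos
  have hac : ContinuousOn a (Ici 0) := fun s hs => (ha s hs).continuousAt.continuousWithinAt
  have hvc : ContinuousOn v (Ici 0) := fun s hs => (hv s hs).continuousAt.continuousWithinAt
  have hsub : Icc 0 t ⊆ Ici (0 : ℝ) := Icc_subset_Ici_self
  have hsqrt : ContinuousOn (fun s => √(a t - a s)) (Icc 0 t) :=
    (continuousOn_const.sub (hac.mono hsub)).sqrt
  have hI1 := intervalIntegrable_inv_sqrt_image_sub_mul ha ha' hapos ht
    (w := fun s => a' s / 2 * v s) ((ha'.div_const 2).mul hvc)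
  have hI2 : IntervalIntegrable (fun s => √(a t - a s) * v' s) volume 0 t := by
    apply ContinuousOn.intervalIntegrable
    rw [uIcc_of_le ht.le]
    exact hsqrt.mul (hv'.mono hsub)
  have hftc := integral_eq_sub_of_hasDerivAt_of_le ht.le
    (hsqrt.mul (hvc.mono hsub)) (f' := fun s =>
      √(a t - a s) * v' s - (√(a t - a s))⁻¹ * (a' s / 2 * v s))
    (fun s hs => by
      have hlt := hmono (mem_Ici.2 hs.1.le) (mem_Ici.2 ht.le) hs.2
      have h := (((hasDerivAt_const s (a t)).sub (ha s hs.1.le)).sqrt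
        (sub_pos.2 hlt).ne').mul (hv s hs.1.le)
      refine h.congr_deriv ?_
      simp only [Pi.sub_apply, div_mul_eq_div_div]
      ring)
    (hI2.sub hI1)
  rw [integral_sub hI2 hI1] at hftc
  rw [Rop_eq_integral_inv_sqrt ha hapos ht]
  simp only [Pi.mul_apply, sub_self, Real.sqrt_zero, zero_mul, zero_sub] at hftc
  linarith

theorem setIntegral_comp_image_sub_mul_eq (ha : ∀ s ∈ Ici (0 : ℝ), HasDerivAt a (a' s) s)
    (hapos : ∀ s : ℝ, 0 < s → 0 < a' s) {g : ℝ → ℝ} (hgneg : ∀ x < 0, g x = 0)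
    (w : ℝ → ℝ) {t T : ℝ} (ht : 0 < t) (htT : t ≤ T) :
    ∫ s in Ioc 0 T, g (a t - a s) * w s = ∫ s in (0 : ℝ)..t, g (a t - a s) * w s := by
  have hmono := strictMonoOn_Ici_of_hasDerivAt_pos ha hapos
  rw [integral_of_le ht.le]
  refine setIntegral_eq_of_subset_of_forall_sdiff_eq_zero measurableSet_Ioc
    (Ioc_subset_Ioc_right htT) fun s hs => ?_
  have hts : t < s := not_le.1 fun h => hs.2 ⟨hs.1.1, h⟩
  rw [hgneg _ (sub_neg.2 (hmono (mem_Ici.2 ht.le) (mem_Ici.2 hs.1.1.le) hts)), zero_mul]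

theorem hasDerivAt_integral_sqrt_image_sub (ha : ∀ s ∈ Ici (0 : ℝ), HasDerivAt a (a' s) s)
    (ha' : ContinuousOn a' (Ici 0)) (hapos : ∀ s : ℝ, 0 < s → 0 < a' s)
    {w : ℝ → ℝ} (hw : ContinuousOn w (Ici 0)) {t : ℝ} (ht : 0 < t) :
    HasDerivAt (fun τ => ∫ s in (0 : ℝ)..τ, √(a τ - a s) * w s)
      (∫ s in (0 : ℝ)..t, a' t / (2 * √(a t - a s)) * w s) t := by
  have hmono := strictMonoOn_Ici_of_hasDerivAt_pos ha hapos
  have hac : ContinuousOn a (Ici 0) := fun s hs => (ha s hs).continuousAt.continuousWithinAt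
  have hsub : Icc 0 (2 * t) ⊆ Ici (0 : ℝ) := Icc_subset_Ici_self
  have hsub' : Ioc 0 (2 * t) ⊆ Ici (0 : ℝ) := Ioc_subset_Icc_self.trans hsub
  have hcont : ∀ τ, ContinuousOn (fun s => √(a τ - a s) * w s) (Icc 0 (2 * t)) := fun τ =>
    ((continuousOn_const.sub (hac.mono hsub)).sqrt).mul (hw.mono hsub)
  obtain ⟨K, hK⟩ := (ha t ht.le).isBigO_sub.bound
  have hbound : IntegrableOn (fun s => (√|a t - a s|)⁻¹ * (K * |w s|)) (Ioc 0 (2 * t)) := by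
    have h := (intervalIntegrable_inv_sqrt_abs_image_sub ha ha' hapos ht).mul_continuousOn
      (g := fun s => K * |w s|) (by
        rw [uIcc_of_le (by linarith)]
        exact continuousOn_const.mul (hw.mono hsub).abs)
    exact (intervalIntegrable_iff_integrableOn_Ioc_of_le (by linarith)).1 h
  have hne : ∀ᵐ s ∂(volume.restrict (Ioc 0 (2 * t))), a t - a s ≠ 0 := by
    filter_upwards [ae_restrict_of_ae (Measure.ae_ne volume t),
      ae_restrict_mem measurableSet_Ioc] with s hst hs h0
    exact hst (hmono.injOn (mem_Ici.2 hs.1.le) (mem_Ici.2 ht.le) (sub_eq_zero.1 h0).symm)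
  have hderiv := (hasDerivAt_integral_of_dominated_slope (μ := volume.restrict (Ioc 0 (2 * t)))
    (F := fun τ s => √(a τ - a s) * w s) (F' := fun s => a' t / (2 * √(a t - a s)) * w s)
    (bound := fun s => (√|a t - a s|)⁻¹ * (K * |w s|)) hK
    (fun τ _ => ((hcont τ).mono Ioc_subset_Icc_self).aestronglyMeasurable measurableSet_Ioc)
    ((hcont t).integrableOn_Icc.mono_set Ioc_subset_Icc_self) ?_ ?_ hbound ?_).2
  · rw [integral_of_le ht.le]
    have hset : ∫ s in Ioc 0 (2 * t), a' t / (2 * √(a t - a s)) * w s =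
        ∫ s in Ioc 0 t, a' t / (2 * √(a t - a s)) * w s := by
      rw [setIntegral_comp_image_sub_mul_eq ha hapos (g := fun x => a' t / (2 * √x))
        (fun x hx => by simp [Real.sqrt_eq_zero_of_nonpos hx.le]) w ht (by linarith),
        integral_of_le ht.le]
    rw [← hset]
    refine hderiv.congr_of_eventuallyEq ?_
    filter_upwards [Ioo_mem_nhds ht (by linarith : t < 2 * t)] with τ hτ
    exact (setIntegral_comp_image_sub_mul_eq ha hapos (g := fun x => √x)
      (fun x hx => Real.sqrt_eq_zero_of_nonpos hx.le) w hτ.1 hτ.2.le).symm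
  · have hm : AEMeasurable (fun s => √(a t - a s)) (volume.restrict (Ioc 0 (2 * t))) :=
      ((continuousOn_const.sub (hac.mono hsub')).sqrt).aemeasurable measurableSet_Ioc
    exact (((hm.const_mul 2).const_div (a' t)).mul
      ((hw.mono hsub').aemeasurable measurableSet_Ioc)).aestronglyMeasurable
  · filter_upwards [hne] with s hs τ hτ
    have h := abs_sqrt_sub_sqrt_le (a τ - a s) hs
    have hτ' : ‖a τ - a t‖ ≤ K * ‖τ - t‖ := hτ
    rw [sub_sub_sub_cancel_right] at h
    rw [← sub_mul, norm_mul, Real.norm_eq_abs, Real.norm_eq_abs]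
    calc |√(a τ - a s) - √(a t - a s)| * |w s|
        ≤ (K * ‖τ - t‖ * (√|a t - a s|)⁻¹) * |w s| := by
          gcongr
          exact h.trans (by gcongr; exact hτ')
      _ = _ := by ring
  · filter_upwards [hne] with s hs
    exact (((ha t ht.le).sub_const (a s)).sqrt hs).mul_const (w s)

theorem hasDerivAt_Rop (ha : ∀ s ∈ Ici (0 : ℝ), HasDerivAt a (a' s) s)
    (ha' : ContinuousOn a' (Ici 0)) (hapos : ∀ s : ℝ, 0 < s → 0 < a' s)
    (hv : ∀ s ∈ Ici (0 : ℝ), HasDerivAt v (v' s) s) (hv' : ContinuousOn v' (Ici 0))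
    {t : ℝ} (ht : 0 < t) :
    HasDerivAt (Rop a a' v) (a' t / (2 * √(a t - a 0)) * v 0 +
      ∫ s in (0 : ℝ)..t, a' t / (2 * √(a t - a s)) * v' s) t := by
  have hlt := strictMonoOn_Ici_of_hasDerivAt_pos ha hapos self_mem_Ici (mem_Ici.2 ht.le) ht
  refine (((((ha t ht.le).sub_const (a 0)).sqrt (sub_pos.2 hlt).ne').mul_const (v 0)).add
    (hasDerivAt_integral_sqrt_image_sub ha ha' hapos hv' ht)).congr_of_eventuallyEq ?_
  filter_upwards [Ioi_mem_nhds ht] with τ hτ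
  exact Rop_eq_add_integral_sqrt ha ha' hapos hv hv' hτ

/-- Expanding `v 0 = v t - ∫ v'` exhibits the derivative of `Rop a a' v` in terms of `v t` and the
difference kernel, which is controlled by the kernel of `Rop` itself. -/
theorem deriv_Rop_eq (ha : ∀ s ∈ Ici (0 : ℝ), HasDerivAt a (a' s) s)
    (ha' : ContinuousOn a' (Ici 0)) (hapos : ∀ s : ℝ, 0 < s → 0 < a' s)
    (hv : ∀ s ∈ Ici (0 : ℝ), HasDerivAt v (v' s) s) (hv' : ContinuousOn v' (Ici 0))
    {t : ℝ} (ht : 0 < t) :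
    deriv (Rop a a' v) t = a' t / 2 * (√(a t - a 0))⁻¹ * v t +
      ∫ s in (0 : ℝ)..t, a' t / 2 * ((√(a t - a s))⁻¹ - (√(a t - a 0))⁻¹) * v' s := by
  rw [(hasDerivAt_Rop ha ha' hapos hv hv' ht).deriv]
  have hI1 : IntervalIntegrable (fun s => a' t / 2 * ((√(a t - a s))⁻¹ * v' s)) volume 0 t :=
    (intervalIntegrable_inv_sqrt_image_sub_mul ha ha' hapos ht hv').const_mul _
  have hI2 : IntervalIntegrable v' volume 0 t := by
    apply ContinuousOn.intervalIntegrable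
    rw [uIcc_of_le ht.le]
    exact hv'.mono Icc_subset_Ici_self
  have hftc : ∫ s in (0 : ℝ)..t, v' s = v t - v 0 :=
    integral_eq_sub_of_hasDerivAt (fun s hs => by
      rw [uIcc_of_le ht.le] at hs
      exact hv s hs.1) hI2
  have hsplit : ∫ s in (0 : ℝ)..t, a' t / 2 * ((√(a t - a s))⁻¹ - (√(a t - a 0))⁻¹) * v' s =
      (∫ s in (0 : ℝ)..t, a' t / 2 * ((√(a t - a s))⁻¹ * v' s)) -
        a' t / 2 * (√(a t - a 0))⁻¹ * (v t - v 0) := by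
    rw [← hftc, ← intervalIntegral.integral_const_mul, ← integral_sub hI1 (hI2.const_mul _)]
    congr 1 with s
    ring
  have hform : ∫ s in (0 : ℝ)..t, a' t / (2 * √(a t - a s)) * v' s =
      ∫ s in (0 : ℝ)..t, a' t / 2 * ((√(a t - a s))⁻¹ * v' s) := by
    congr 1 with s
    rw [div_mul_eq_div_div]
    ring
  rw [hsplit, hform, div_mul_eq_div_div]
  ring

theorem abs_kernel_sub_le (ha : ∀ s ∈ Ici (0 : ℝ), HasDerivAt a (a' s) s)
    (ha' : ContinuousOn a' (Ici 0)) (hapos : ∀ s : ℝ, 0 < s → 0 < a' s) {t : ℝ}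
    (hmono : AntitoneOn (fun s => (a' t - a' s) / √(a t - a s)) (Ico 0 t))
    {s : ℝ} (hs : s ∈ Ico 0 t) :
    |a' t / 2 * ((√(a t - a s))⁻¹ - (√(a t - a 0))⁻¹)| ≤ (√(a t - a s))⁻¹ * (a' s / 2) := by
  have ht : 0 < t := hs.1.trans_lt hs.2
  have hinc := strictMonoOn_Ici_of_hasDerivAt_pos ha hapos
  have hst := hinc (mem_Ici.2 hs.1) (mem_Ici.2 ht.le) hs.2
  have h0s := hinc.monotoneOn self_mem_Ici (mem_Ici.2 hs.1) hs.1
  have ha0 : 0 ≤ a' 0 := by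
    have hlim : Tendsto a' (𝓝[>] 0) (𝓝 (a' 0)) :=
      (ha' 0 self_mem_Ici).mono_left (nhdsWithin_mono 0 Ioi_subset_Ici_self)
    exact ge_of_tendsto hlim (eventually_mem_nhdsWithin.mono fun s hs => (hapos s hs).le)
  have hle : (√(a t - a 0))⁻¹ ≤ (√(a t - a s))⁻¹ :=
    inv_anti₀ (Real.sqrt_pos.2 (sub_pos.2 hst)) (Real.sqrt_le_sqrt (by linarith))
  have hanti := hmono (left_mem_Ico.2 ht) hs hs.1
  simp only [div_eq_mul_inv] at hanti
  have hnn : 0 ≤ a' 0 * (√(a t - a 0))⁻¹ := by positivity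
  rw [abs_of_nonneg (mul_nonneg (half_pos (hapos t ht)).le (sub_nonneg.2 hle))]
  linarith

end AbelOperator

theorem abel_operator_derivative_bound (a a' : ℝ → ℝ)
    (ha : ∀ s ∈ Set.Ici (0 : ℝ), HasDerivAt a (a' s) s)
    (ha' : ContinuousOn a' (Set.Ici 0))
    (hapos : ∀ s : ℝ, 0 < s → 0 < a' s)
    (hmono : ∀ t : ℝ, 0 < t →
      AntitoneOn (fun s => (a' t - a' s) / Real.sqrt (a t - a s)) (Set.Ico 0 t))
    (v v' : ℝ → ℝ)
    (hv : ∀ s ∈ Set.Ici (0 : ℝ), HasDerivAt v (v' s) s)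
    (hv' : ContinuousOn v' (Set.Ici 0))
    (t : ℝ) (ht : 0 < t) :
    DifferentiableAt ℝ (Rop a a' v) t ∧
      |deriv (Rop a a' v) t| ≤
        (a' t / 2) * (a t - a 0) ^ (-(1 / 2) : ℝ) * |v t|
          + Rop a a' (fun s => |v' s|) t := by
  have hlt := strictMonoOn_Ici_of_hasDerivAt_pos ha hapos self_mem_Ici (mem_Ici.2 ht.le) ht
  refine ⟨(hasDerivAt_Rop ha ha' hapos hv hv' ht).differentiableAt, ?_⟩
  rw [deriv_Rop_eq ha ha' hapos hv hv' ht, Rop_eq_integral_inv_sqrt ha hapos ht,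
    rpow_neg_half_eq_inv_sqrt (sub_pos.2 hlt).le]
  refine (abs_add_le _ _).trans (add_le_add ?_ ?_)
  · have := hapos t ht
    rw [abs_mul, abs_of_nonneg (by positivity : 0 ≤ a' t / 2 * (√(a t - a 0))⁻¹)]
  · rw [← Real.norm_eq_abs]
    refine norm_integral_le_of_norm_le ht.le ?_
      (intervalIntegrable_inv_sqrt_image_sub_mul ha ha' hapos ht ((ha'.div_const 2).mul hv'.abs))
    filter_upwards [Measure.ae_ne volume t] with s hst hs
    rw [norm_mul, Real.norm_eq_abs, Real.norm_eq_abs, ← mul_assoc]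
    exact mul_le_mul_of_nonneg_right
      (abs_kernel_sub_le ha ha' hapos (hmono t ht) ⟨hs.1.le, lt_of_le_of_ne hs.2 hst⟩)
      (abs_nonneg _)
end

section
/- Let a ∈ C¹(ℝ) be an even function with a′(s) > 0 for s > 0 and such that for each t > 0 the function s ↦ (a′(t) − a′(s))/√(a(t) − a(s)) is monotonically decreasing on [0,t). Let f : [0,∞) → ℝ be continuous, and set W̃(t,r,f) = ∫_0^t ∫_{|r−s|}^{r+s} |f(λ)| a′(s) ((a(t) − a(s))(a(r+λ) − a(s))(a(s) − a(r−λ)))^{−1/2} dλ ds. Then: if 0 < t ≤ r, W̃(t,r,f) ≤ π ∫_{r−t}^{r+t} |f(λ)| (a(r+λ) − a(t))^{−1/2} dλ; and if t > r > 0, W̃(t,r,f) ≤ π ∫_0^{t+r} |f(λ)| |a(r+λ) − a(t)|^{−1/2} dλ. -/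
open MeasureTheory intervalIntegral

/-- The kernel `W̃(t,r,f)` arising from the Duhamel integral, with `|f|` in place of `f`. -/
noncomputable def Wtil (a a' : ℝ → ℝ) (t r : ℝ) (f : ℝ → ℝ) : ℝ :=
  ∫ s in (0 : ℝ)..t, ∫ l in |r - s|..(r + s),
    |f l| * a' s *
      ((a t - a s) * (a (r + l) - a s) * (a s - a (r - l))) ^ (-(1 / 2) : ℝ)

open Set in
/-- The arcsine integral `∫ a' / √((a y - a)(a - a x)) = π` over `(x, y)`, as an upper bound. -/
lemma lintegral_arcsine_le_pi {a a' : ℝ → ℝ} {x y : ℝ} (hxy : x < y)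
    (ha : ∀ s, HasDerivAt a (a' s) s) (hpos : ∀ s ∈ Ioo x y, 0 ≤ a' s)
    (hmono : StrictMonoOn a (Icc x y)) :
    ∫⁻ s in Ioo x y, ENNReal.ofReal (a' s * ((a y - a s) * (a s - a x)) ^ (-(1 / 2) : ℝ)) ≤
      ENNReal.ofReal Real.pi := by
  have hx : x ∈ Icc x y := left_mem_Icc.2 hxy.le
  have hy : y ∈ Icc x y := right_mem_Icc.2 hxy.le
  have hAB : 0 < a y - a x := sub_pos.2 (hmono hx hy hxy)
  set G : ℝ → ℝ := fun s => Real.arcsin ((2 * a s - a x - a y) / (a y - a x)) with hG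
  have hac : Continuous a := continuous_iff_continuousAt.2 fun s => (ha s).continuousAt
  have hGc : Continuous G := Real.continuous_arcsin.comp (by fun_prop)
  have hGd : ∀ s ∈ Ioo x y,
      HasDerivAt G (a' s * ((a y - a s) * (a s - a x)) ^ (-(1 / 2) : ℝ)) s := by
    intro s hs
    have h1 : 0 < a y - a s := sub_pos.2 (hmono ⟨hs.1.le, hs.2.le⟩ hy hs.2)
    have h2 : 0 < a s - a x := sub_pos.2 (hmono hx ⟨hs.1.le, hs.2.le⟩ hs.1)
    have hu : HasDerivAt (fun s => (2 * a s - a x - a y) / (a y - a x))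
        (2 * a' s / (a y - a x)) s :=
      ((((ha s).const_mul 2).sub_const _).sub_const _).div_const _
    have hne1 : (2 * a s - a x - a y) / (a y - a x) ≠ -1 := by
      rw [Ne, div_eq_iff hAB.ne']; intro h; linarith
    have hne2 : (2 * a s - a x - a y) / (a y - a x) ≠ 1 := by
      rw [Ne, div_eq_iff hAB.ne']; intro h; linarith
    have hcomp := (Real.hasDerivAt_arcsin hne1 hne2).comp s hu
    refine hcomp.congr_deriv ?_
    have hsq : 1 - ((2 * a s - a x - a y) / (a y - a x)) ^ 2 =
        (2 / (a y - a x)) ^ 2 * ((a y - a s) * (a s - a x)) := by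
      field_simp; ring
    rw [hsq, Real.sqrt_mul (by positivity), Real.sqrt_sq (by positivity),
      Real.rpow_neg (by positivity), ← Real.sqrt_eq_rpow]
    have : 0 < √((a y - a s) * (a s - a x)) := Real.sqrt_pos.2 (by positivity)
    field_simp
  have hnn : ∀ s ∈ Ioo x y, 0 ≤ a' s * ((a y - a s) * (a s - a x)) ^ (-(1 / 2) : ℝ) := by
    intro s hs
    have h1 : 0 < a y - a s := sub_pos.2 (hmono ⟨hs.1.le, hs.2.le⟩ hy hs.2)
    have h2 : 0 < a s - a x := sub_pos.2 (hmono hx ⟨hs.1.le, hs.2.le⟩ hs.1)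
    have := hpos s hs
    positivity
  have hInt := intervalIntegral.integrableOn_deriv_of_nonneg hGc.continuousOn hGd hnn
  have hFTC := intervalIntegral.integral_eq_sub_of_hasDerivAt_of_le hxy.le hGc.continuousOn hGd
    ((intervalIntegrable_iff_integrableOn_Ioc_of_le hxy.le).2 hInt)
  rw [intervalIntegral.integral_of_le hxy.le, integral_Ioc_eq_integral_Ioo] at hFTC
  rw [← ofReal_integral_eq_lintegral_ofReal (hInt.mono_set Ioo_subset_Ioc_self)
    ((ae_restrict_iff' measurableSet_Ioo).2 (Filter.Eventually.of_forall hnn)), hFTC]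
  refine ENNReal.ofReal_le_ofReal ?_
  have := Real.arcsin_le_pi_div_two ((2 * a y - a x - a y) / (a y - a x))
  have := Real.neg_pi_div_two_le_arcsin ((2 * a x - a x - a y) / (a y - a x))
  simp only [hG]
  linarith

lemma integrableOn_abs_sub_rpow_neg_half {p u v : ℝ} (huv : u ≤ v) :
    IntegrableOn (fun l : ℝ => |l - p| ^ (-(1 / 2) : ℝ)) (Set.Ioc u v) := by
  rw [← intervalIntegrable_iff_integrableOn_Ioc_of_le huv]
  have key : ∀ u v : ℝ, IntervalIntegrable (fun x : ℝ => x ^ (-(1 / 2) : ℝ)) volume u v :=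
    fun u v => intervalIntegrable_rpow' (by norm_num)
  have h1 : IntervalIntegrable (fun l : ℝ => (l - p) ^ (-(1 / 2) : ℝ)) volume u v := by
    simpa using (key (u - p) (v - p)).comp_sub_right p
  have h2 : IntervalIntegrable (fun l : ℝ => (p - l) ^ (-(1 / 2) : ℝ)) volume u v := by
    simpa using (key (p - u) (p - v)).comp_sub_left p
  refine (h1.add h2).congr fun l _ => ?_
  have hneg : ∀ x : ℝ, x < 0 → x ^ (-(1 / 2) : ℝ) = 0 := fun x hx => by
    rw [Real.rpow_def_of_neg hx,
      show (-(1 / 2) : ℝ) * Real.pi = -(Real.pi / 2) by ring, Real.cos_neg, Real.cos_pi_div_two,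
      mul_zero]
  rcases lt_trichotomy l p with h | h | h
  · rw [hneg (l - p) (by linarith), zero_add, abs_of_neg (by linarith), neg_sub]
  · subst h
    simp [Real.zero_rpow]
  · rw [hneg (p - l) (by linarith), add_zero, abs_of_pos (by linarith)]

open Set in
/-- The singularity of `|a (r + l) - a t| ^ (-1/2)` is integrable because `a'` is bounded below. -/
lemma integrableOn_mul_abs_sub_rpow {a a' g : ℝ → ℝ} (ha : ∀ s, HasDerivAt a (a' s) s)
    (ha' : Continuous a') (hapos : ∀ s, 0 < s → 0 < a' s) (hg : Continuous g)
    {t r u v : ℝ} (ht : 0 < t) (hr : 0 < r) (hu : 0 ≤ u) (huv : u ≤ v) :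
    IntegrableOn (fun l => |g l| * |a (r + l) - a t| ^ (-(1 / 2) : ℝ)) (Ioc u v) := by
  have hac : Continuous a := continuous_iff_continuousAt.2 fun s => (ha s).continuousAt
  obtain ⟨c, hc, hcle⟩ : ∃ c, 0 < c ∧ ∀ s ∈ Icc (min r t) (max t (r + v)), c ≤ a' s := by
    obtain ⟨z, hz, hzmin⟩ := (isCompact_Icc (a := min r t) (b := max t (r + v))).exists_isMinOn
      ⟨t, min_le_right _ _, le_max_left _ _⟩ ha'.continuousOn
    exact ⟨a' z, hapos z ((lt_min hr ht).trans_le hz.1), fun s hs => hzmin hs⟩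
  obtain ⟨M, hM⟩ := (isCompact_Icc (a := u) (b := v)).exists_bound_of_continuousOn
    hg.continuousOn
  have hlow : ∀ l ∈ Ioc u v, c * |l - (t - r)| ≤ |a (r + l) - a t| := by
    intro l hl
    have hmem : r + l ∈ Icc (min r t) (max t (r + v)) :=
      ⟨(min_le_left _ _).trans (by linarith [hl.1]), le_max_of_le_right (by linarith [hl.2])⟩
    have htm : t ∈ Icc (min r t) (max t (r + v)) := ⟨min_le_right _ _, le_max_left _ _⟩
    have mvt : ∀ p ∈ Icc (min r t) (max t (r + v)), ∀ q ∈ Icc (min r t) (max t (r + v)),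
        p ≤ q → c * (q - p) ≤ a q - a p :=
      (convex_Icc _ _).mul_sub_le_image_sub_of_le_deriv hac.continuousOn
        (fun s _ => (ha s).differentiableAt.differentiableWithinAt)
        (fun s hs => by rw [(ha s).deriv]; exact hcle s (interior_subset hs))
    rcases le_total (r + l) t with h | h
    · have := mvt _ hmem _ htm h
      rw [abs_of_nonpos (by linarith : l - (t - r) ≤ 0)]
      exact le_trans (by linarith) (neg_le_abs _)
    · have := mvt _ htm _ hmem h
      rw [abs_of_nonneg (by linarith : 0 ≤ l - (t - r))]
      exact le_trans (by linarith) (le_abs_self _)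
  have hdom := (integrableOn_abs_sub_rpow_neg_half (p := t - r) huv).const_mul
    (M * c ^ (-(1 / 2) : ℝ))
  refine hdom.mono' ?_ ?_
  · exact (Measurable.mul (Continuous.measurable (by fun_prop))
      (Measurable.pow_const (Continuous.measurable (by fun_prop)) _)).aestronglyMeasurable
  · refine (ae_restrict_iff' measurableSet_Ioc).2 (Filter.Eventually.of_forall fun l hl => ?_)
    have hMl : |g l| ≤ M := hM l ⟨hl.1.le, hl.2⟩
    rw [Real.norm_of_nonneg (by positivity), mul_assoc,
      ← Real.mul_rpow hc.le (abs_nonneg _)]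
    refine mul_le_mul hMl ?_ (by positivity) ((abs_nonneg _).trans hMl)
    by_cases hl0 : l = t - r
    · subst hl0; simp [Real.zero_rpow]
    · exact Real.rpow_le_rpow_of_nonpos
        (mul_pos hc (abs_pos.2 (sub_ne_zero.2 hl0))) (hlow l hl) (by norm_num)

open Set in
/-- The kernel integrated in `s` first, at a fixed `l ≠ t - r`. -/
lemma lintegral_kernel_le {a a' : ℝ → ℝ} (heven : ∀ s, a (-s) = a s)
    (ha : ∀ s, HasDerivAt a (a' s) s) (hapos : ∀ s, 0 < s → 0 < a' s)
    {t r l : ℝ} (hr : 0 < r) (hl0 : 0 < l) (hlt : |r - l| < t) (hne : l ≠ t - r) (b : ℝ) :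
    ∫⁻ s in Ioo |r - l| (min t (r + l)), ‖|b| * a' s *
      ((a t - a s) * (a (r + l) - a s) * (a s - a (r - l))) ^ (-(1 / 2) : ℝ)‖ₑ ≤
    ENNReal.ofReal Real.pi * ENNReal.ofReal (|b| * |a (r + l) - a t| ^ (-(1 / 2) : ℝ)) := by
  have hac : Continuous a := continuous_iff_continuousAt.2 fun s => (ha s).continuousAt
  have hmono : StrictMonoOn a (Ici 0) :=
    strictMonoOn_of_deriv_pos (convex_Ici 0) hac.continuousOn fun s hs => by
      rw [(ha s).deriv]; rw [interior_Ici] at hs; exact hapos s hs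
  have habs : a (r - l) = a |r - l| := by
    rcases abs_choice (r - l) with h | h <;> rw [h]
    exact (heven _).symm
  set x := |r - l| with hx
  set y := min t (r + l) with hy
  have hx0 : 0 ≤ x := abs_nonneg _
  have hxrl : x < r + l := abs_lt.2 ⟨by linarith, by linarith⟩
  have hxy : x < y := lt_min hlt hxrl
  have harc := lintegral_arcsine_le_pi hxy ha
    (fun s hs => (hapos s (hx0.trans_lt hs.1)).le)
    (hmono.mono fun s hs => hx0.trans hs.1)
  set K : ℝ := |b| * |a (r + l) - a t| ^ (-(1 / 2) : ℝ) with hK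
  have hK0 : 0 ≤ K := by positivity
  have hpt : ∀ s ∈ Ioo x y, ‖|b| * a' s *
      ((a t - a s) * (a (r + l) - a s) * (a s - a (r - l))) ^ (-(1 / 2) : ℝ)‖ₑ ≤
      ENNReal.ofReal K *
        ENNReal.ofReal (a' s * ((a y - a s) * (a s - a x)) ^ (-(1 / 2) : ℝ)) := by
    intro s hs
    have hs0 : 0 < s := hx0.trans_lt hs.1
    have hst : s < t := hs.2.trans_le (min_le_left _ _)
    have hsr : s < r + l := hs.2.trans_le (min_le_right _ _)
    have h1 : a s < a t := hmono hs0.le (hs0.trans hst).le hst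
    have h2 : a s < a (r + l) := hmono hs0.le (hs0.trans hsr).le hsr
    have h3 : a x < a s := hmono hx0 hs0.le hs.1
    have hd : 0 < |a (r + l) - a t| := by
      refine abs_pos.2 (sub_ne_zero.2 fun h => hne ?_)
      have := hmono.injOn (hs0.trans hsr).le (hs0.trans hst).le h
      linarith
    have h4 : a s < a y := hmono hs0.le (hs0.trans hs.2).le hs.2
    have hfac : |a (r + l) - a t| * (a y - a s) ≤ (a t - a s) * (a (r + l) - a s) := by
      rcases le_total t (r + l) with h | h
      · have hle : a t ≤ a (r + l) := hmono.monotoneOn (hs0.trans hst).le (hs0.trans hsr).le h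
        rw [hy, min_eq_left h, abs_of_nonneg (by linarith)]
        nlinarith
      · have hle : a (r + l) ≤ a t := hmono.monotoneOn (hs0.trans hsr).le (hs0.trans hst).le h
        rw [hy, min_eq_right h, abs_of_nonpos (by linarith)]
        nlinarith
    have hy1 : 0 < a y - a s := by linarith
    have hx1 : 0 < a s - a x := by linarith
    have has := hapos s hs0
    rw [habs, ← ENNReal.ofReal_mul hK0, Real.enorm_eq_ofReal_abs]
    refine ENNReal.ofReal_le_ofReal ?_
    have hrp : ((a t - a s) * (a (r + l) - a s) * (a s - a x)) ^ (-(1 / 2) : ℝ) ≤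
        |a (r + l) - a t| ^ (-(1 / 2) : ℝ) *
          ((a y - a s) * (a s - a x)) ^ (-(1 / 2) : ℝ) := by
      rw [← Real.mul_rpow hd.le (by positivity), ← mul_assoc]
      exact Real.rpow_le_rpow_of_nonpos (by positivity)
        (mul_le_mul_of_nonneg_right hfac hx1.le) (by norm_num)
    have hbase : 0 ≤ (a t - a s) * (a (r + l) - a s) * (a s - a x) :=
      mul_nonneg (mul_nonneg (by linarith) (by linarith)) hx1.le
    rw [abs_of_nonneg (by positivity)]
    calc _ ≤ |b| * a' s * _ := mul_le_mul_of_nonneg_left hrp (by positivity)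
      _ = _ := by rw [hK]; ring
  calc _ ≤ ∫⁻ s in Ioo x y, ENNReal.ofReal K *
        ENNReal.ofReal (a' s * ((a y - a s) * (a s - a x)) ^ (-(1 / 2) : ℝ)) :=
        setLIntegral_mono' measurableSet_Ioo hpt
    _ = ENNReal.ofReal K * ∫⁻ s in Ioo x y,
        ENNReal.ofReal (a' s * ((a y - a s) * (a s - a x)) ^ (-(1 / 2) : ℝ)) :=
        lintegral_const_mul' _ _ ENNReal.ofReal_ne_top
    _ ≤ ENNReal.ofReal K * ENNReal.ofReal Real.pi := by gcongr
    _ = _ := mul_comm _ _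

/-- The defining iterated integral is bounded by its Lebesgue counterpart. -/
lemma ofReal_intervalIntegral_intervalIntegral_le (F : ℝ → ℝ → ℝ) {t r : ℝ} (ht : 0 ≤ t)
    (hr : 0 ≤ r) :
    ENNReal.ofReal (∫ s in (0 : ℝ)..t, ∫ l in |r - s|..(r + s), F s l) ≤
      ∫⁻ s in Set.Ioo 0 t, ∫⁻ l in Set.Ioo |r - s| (r + s), ‖F s l‖ₑ := by
  refine (Real.ofReal_le_enorm _).trans ?_
  rw [integral_of_le ht, integral_Ioc_eq_integral_Ioo]
  refine (enorm_integral_le_lintegral_enorm _).trans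
    (setLIntegral_mono' measurableSet_Ioo fun s hs => ?_)
  rw [integral_of_le (abs_le.2 ⟨by linarith [hs.1], by linarith [hs.1]⟩),
    integral_Ioc_eq_integral_Ioo]
  exact enorm_integral_le_lintegral_enorm _

open Set in
/-- Both bounds at once, for a continuous `g` on the whole line. -/
lemma Wtil_le_of_continuous {a a' g : ℝ → ℝ} (heven : ∀ s, a (-s) = a s)
    (ha : ∀ s, HasDerivAt a (a' s) s) (ha' : Continuous a') (hapos : ∀ s, 0 < s → 0 < a' s)
    (hg : Continuous g) {t r : ℝ} (ht : 0 < t) (hr : 0 < r) :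
    Wtil a a' t r g ≤ Real.pi *
      ∫ l in (max 0 (r - t))..(r + t), |g l| * |a (r + l) - a t| ^ (-(1 / 2) : ℝ) := by
  have hac : Continuous a := continuous_iff_continuousAt.2 fun s => (ha s).continuousAt
  have hL : max 0 (r - t) ≤ r + t := max_le (by linarith) (by linarith)
  have hInt := integrableOn_mul_abs_sub_rpow ha ha' hapos hg ht hr (le_max_left 0 (r - t)) hL
  set F : ℝ → ℝ → ℝ := fun s l => |g l| * a' s *
    ((a t - a s) * (a (r + l) - a s) * (a s - a (r - l))) ^ (-(1 / 2) : ℝ) with hF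
  set D : Set (ℝ × ℝ) := {p | (0 < p.1 ∧ p.1 < t) ∧ |r - p.1| < p.2 ∧ p.2 < r + p.1} with hD
  have hDm : MeasurableSet D := by
    have hlt : ∀ {u v : ℝ × ℝ → ℝ}, Continuous u → Continuous v → MeasurableSet {p | u p < v p} :=
      fun hu hv => (isOpen_lt hu hv).measurableSet
    exact ((hlt continuous_const continuous_fst).inter (hlt continuous_fst continuous_const)).inter
      ((hlt (continuous_const.sub continuous_fst).abs continuous_snd).inter
        (hlt continuous_snd (continuous_const.add continuous_fst)))
  have hFm : Measurable fun p : ℝ × ℝ => ‖F p.1 p.2‖ₑ := by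
    refine Measurable.enorm (Measurable.mul (Continuous.measurable (by fun_prop))
      (Measurable.pow_const (Continuous.measurable (by fun_prop)) _))
  set H : ℝ × ℝ → ENNReal := D.indicator fun p => ‖F p.1 p.2‖ₑ with hH
  have hHm : Measurable H := hFm.indicator hDm
  have hleft : ∫⁻ s in Ioo 0 t, ∫⁻ l in Ioo |r - s| (r + s), ‖F s l‖ₑ =
      ∫⁻ s, ∫⁻ l, H (s, l) := by
    rw [← lintegral_indicator measurableSet_Ioo]
    refine lintegral_congr fun s => ?_
    by_cases hs : s ∈ Ioo 0 t
    · rw [indicator_of_mem hs, ← lintegral_indicator measurableSet_Ioo]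
      refine lintegral_congr fun l => ?_
      by_cases hl : l ∈ Ioo |r - s| (r + s)
      · rw [indicator_of_mem hl, hH, indicator_of_mem (show (s, l) ∈ D from ⟨hs, hl⟩)]
      · rw [indicator_of_notMem hl, hH, indicator_of_notMem fun h : (s, l) ∈ D => hl h.2]
    · rw [indicator_of_notMem hs]
      have : ∀ l, H (s, l) = 0 := fun l => indicator_of_notMem (fun h => hs h.1) _
      simp [this]
  have hright : ∫⁻ l, ∫⁻ s, H (s, l) ≤ ∫⁻ l in Ioc (max 0 (r - t)) (r + t),
      ENNReal.ofReal Real.pi *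
        ENNReal.ofReal (|g l| * |a (r + l) - a t| ^ (-(1 / 2) : ℝ)) := by
    rw [← lintegral_indicator measurableSet_Ioc]
    refine lintegral_mono_ae ?_
    have hae : ∀ᵐ l : ℝ, l ≠ t - r := by simp [ae_iff]
    filter_upwards [hae] with l hne
    have hmem : ∀ s, (s, l) ∈ D → (0 < l ∧ |r - l| < t) ∧ s ∈ Ioo |r - l| (min t (r + l)) := by
      rintro s ⟨⟨hs0, hst⟩, hl1, hl2⟩
      simp only at hs0 hst hl1 hl2
      have h := abs_lt.1 hl1
      have h' : |r - l| < s := abs_lt.2 ⟨by linarith, by linarith⟩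
      exact ⟨⟨(abs_nonneg _).trans_lt hl1, h'.trans hst⟩, h', lt_min hst (by linarith)⟩
    by_cases hl : 0 < l ∧ |r - l| < t
    · have h := abs_lt.1 hl.2
      rw [indicator_of_mem (show l ∈ Ioc (max 0 (r - t)) (r + t) from
        ⟨max_lt hl.1 (by linarith), by linarith⟩)]
      refine le_trans ?_ (lintegral_kernel_le heven ha hapos hr hl.1 hl.2 hne (g l))
      rw [← lintegral_indicator measurableSet_Ioo]
      refine lintegral_mono fun s => ?_
      by_cases hs : (s, l) ∈ D
      · rw [hH, indicator_of_mem hs, indicator_of_mem (hmem s hs).2]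
      · rw [hH, indicator_of_notMem hs]; exact zero_le
    · have : ∀ s, H (s, l) = 0 := fun s => indicator_of_notMem (fun h => hl (hmem s h).1) _
      simp [this]
  have hmain : ENNReal.ofReal (Wtil a a' t r g) ≤ ENNReal.ofReal (Real.pi *
      ∫ l in (max 0 (r - t))..(r + t), |g l| * |a (r + l) - a t| ^ (-(1 / 2) : ℝ)) := by
    calc ENNReal.ofReal (Wtil a a' t r g)
        ≤ ∫⁻ s in Ioo 0 t, ∫⁻ l in Ioo |r - s| (r + s), ‖F s l‖ₑ :=
          ofReal_intervalIntegral_intervalIntegral_le F ht.le hr.le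
      _ = ∫⁻ l, ∫⁻ s, H (s, l) := by
          rw [hleft]
          exact lintegral_lintegral_swap (f := fun s l => H (s, l)) hHm.aemeasurable
      _ ≤ _ := hright
      _ = _ := by
          rw [lintegral_const_mul' _ _ ENNReal.ofReal_ne_top, integral_of_le hL,
            ENNReal.ofReal_mul Real.pi_pos.le, ofReal_integral_eq_lintegral_ofReal hInt
              (Filter.Eventually.of_forall fun l => by positivity)]
  refine (ENNReal.ofReal_le_ofReal_iff (mul_nonneg Real.pi_pos.le ?_)).1 hmain
  exact intervalIntegral.integral_nonneg hL fun l _ => by positivity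

/-- `W̃` only sees the values of `f` on `[0, ∞)`. -/
lemma Wtil_congr {a a' f g : ℝ → ℝ} (hfg : ∀ l, 0 ≤ l → f l = g l) {t r : ℝ} (ht : 0 ≤ t)
    (hr : 0 ≤ r) : Wtil a a' t r f = Wtil a a' t r g := by
  refine integral_congr fun s hs => integral_congr fun l hl => ?_
  rw [Set.uIcc_of_le ht] at hs
  rw [Set.uIcc_of_le (abs_le.2 ⟨by linarith [hs.1], by linarith [hs.1]⟩)] at hl
  simp only [hfg l ((abs_nonneg _).trans hl.1)]

theorem duhamel_kernel_bound (a a' : ℝ → ℝ)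
    (heven : ∀ s : ℝ, a (-s) = a s)
    (ha : ∀ s : ℝ, HasDerivAt a (a' s) s)
    (ha' : Continuous a')
    (hapos : ∀ s : ℝ, 0 < s → 0 < a' s)
    (hmono : ∀ t : ℝ, 0 < t →
      AntitoneOn (fun s => (a' t - a' s) / Real.sqrt (a t - a s)) (Set.Ico 0 t))
    (f : ℝ → ℝ) (hf : ContinuousOn f (Set.Ici 0)) (t r : ℝ) :
    (0 < t → t ≤ r →
      Wtil a a' t r f ≤
        Real.pi * ∫ l in (r - t)..(r + t), |f l| * (a (r + l) - a t) ^ (-(1 / 2) : ℝ)) ∧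
    (0 < r → r < t →
      Wtil a a' t r f ≤
        Real.pi * ∫ l in (0 : ℝ)..(t + r), |f l| * |a (r + l) - a t| ^ (-(1 / 2) : ℝ)) := by
  set g : ℝ → ℝ := fun l => f (max 0 l) with hgdef
  have hg : Continuous g :=
    hf.comp_continuous (continuous_const.max continuous_id) fun l => le_max_left 0 l
  have hfg : ∀ l, 0 ≤ l → f l = g l := fun l hl => by rw [hgdef]; simp only [max_eq_right hl]
  have hac : Continuous a := continuous_iff_continuousAt.2 fun s => (ha s).continuousAt
  have hamono : MonotoneOn a (Set.Ici 0) :=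
    (strictMonoOn_of_deriv_pos (convex_Ici 0) hac.continuousOn fun s hs => by
      rw [(ha s).deriv]; rw [interior_Ici] at hs; exact hapos s hs).monotoneOn
  constructor
  · intro ht htr
    have hr : 0 < r := ht.trans_le htr
    have h := Wtil_le_of_continuous heven ha ha' hapos hg ht hr
    rw [max_eq_right (by linarith)] at h
    rw [Wtil_congr hfg ht.le hr.le]
    refine h.trans_eq (congrArg _ (integral_congr fun l hl => ?_))
    rw [Set.uIcc_of_le (by linarith)] at hl
    have hl0 : 0 ≤ l := by linarith [hl.1]
    have hle : a t ≤ a (r + l) :=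
      hamono ht.le (show (0 : ℝ) ≤ r + l by linarith) (by linarith)
    simp only [hfg l hl0, abs_of_nonneg (sub_nonneg.2 hle)]
  · intro hr hrt
    have ht : 0 < t := hr.trans hrt
    have h := Wtil_le_of_continuous heven ha ha' hapos hg ht hr
    rw [max_eq_left (by linarith), add_comm r t] at h
    rw [Wtil_congr hfg ht.le hr.le]
    refine h.trans_eq (congrArg _ (integral_congr fun l hl => ?_))
    rw [Set.uIcc_of_le (by linarith)] at hl
    simp only [hfg l hl.1]
end

section
/- Let k > 0. There exists a constant N_k > 0 such that for all r, t > 0: ∫_{|r−t|}^{r+t} (cosh λ)^{−k−1/2} sinh λ · ((cosh(r+t) − cosh λ)(cosh λ − cosh(r−t)))^{−1/2} dλ ≤ π N_k (cosh(t+r))^{−1/2} (cosh(t−r))^{−k}. -/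
open MeasureTheory intervalIntegral

/-- The affine rescaling of `arcsin` to `(A, B)` is a primitive of `((v - A) * (B - v)) ^ (-1/2)`. -/
lemma hasDerivAt_arcsin_rescale {A B v : ℝ} (hA : A < v) (hB : v < B) :
    HasDerivAt (fun v => Real.arcsin ((2 * v - A - B) / (B - A)))
      (((v - A) * (B - v)) ^ (-(1 / 2) : ℝ)) v := by
  have hBA : 0 < B - A := by linarith
  have hp : 0 < (v - A) * (B - v) := mul_pos (by linarith) (by linarith)
  have h1 : (2 * v - A - B) / (B - A) ≠ -1 := by
    rw [ne_eq, div_eq_iff hBA.ne']; intro h; linarith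
  have h2 : (2 * v - A - B) / (B - A) ≠ 1 := by
    rw [ne_eq, div_eq_iff hBA.ne']; intro h; linarith
  have hlin : HasDerivAt (fun v : ℝ => (2 * v - A - B) / (B - A)) (2 / (B - A)) v := by
    simpa using ((((hasDerivAt_id v).const_mul 2).sub_const A).sub_const B).div_const (B - A)
  refine ((Real.hasDerivAt_arcsin h1 h2).comp v hlin).congr_deriv ?_
  have hsq : 1 - ((2 * v - A - B) / (B - A)) ^ 2
      = (2 / (B - A)) ^ 2 * ((v - A) * (B - v)) := by
    field_simp; ring
  rw [hsq, Real.sqrt_mul (sq_nonneg _), Real.sqrt_sq (by positivity), Real.rpow_neg hp.le,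
    ← Real.sqrt_eq_rpow]
  have := Real.sqrt_pos.2 hp
  field_simp

/-- Pointwise domination: for `v ≥ B / 2` by the first summand, otherwise by the second. -/
lemma rpow_mul_inv_sqrt_le {k A B v : ℝ} (hk0 : 0 < k) (hA : 0 < A) (hAv : A < v) (hvB : v < B) :
    v ^ (k - 1 / 2) * ((v - A) * (B - v)) ^ (-(1 / 2) : ℝ) ≤
      B ^ (k - 1 / 2) * (2 * ((v - A) * (B - v)) ^ (-(1 / 2) : ℝ)
        + 2 * B ^ (-k) * (v - A) ^ (k - 1)) := by
  have hv : 0 < v := hA.trans hAv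
  have hB : 0 < B := hv.trans hvB
  have hva : 0 < v - A := by linarith
  have hbv : 0 < B - v := by linarith
  have hp : 0 < (v - A) * (B - v) := mul_pos hva hbv
  have hQ : 0 < ((v - A) * (B - v)) ^ (-(1 / 2) : ℝ) := Real.rpow_pos_of_pos hp _
  have hR : 0 < 2 * B ^ (-k) * (v - A) ^ (k - 1) := by positivity
  have hBk : 0 < B ^ (k - 1 / 2) := by positivity
  have half_rpow_le {s : ℝ} (hs : -1 ≤ s) : (B / 2) ^ s ≤ 2 * B ^ s := by
    have h : (2 : ℝ) ^ (-s) ≤ 2 := by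
      simpa using Real.rpow_le_rpow_of_exponent_le (x := 2) (by norm_num) (neg_le.1 hs)
    rw [div_eq_inv_mul, Real.mul_rpow (by norm_num) hB.le, Real.inv_rpow (by norm_num),
      ← Real.rpow_neg (by norm_num)]
    gcongr
  have first (h : v ^ (k - 1 / 2) ≤ 2 * B ^ (k - 1 / 2)) :
      v ^ (k - 1 / 2) * ((v - A) * (B - v)) ^ (-(1 / 2) : ℝ) ≤
      B ^ (k - 1 / 2) * (2 * ((v - A) * (B - v)) ^ (-(1 / 2) : ℝ)
        + 2 * B ^ (-k) * (v - A) ^ (k - 1)) := by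
    have := mul_le_mul_of_nonneg_right h hQ.le
    have := mul_pos hBk hR
    nlinarith
  rcases le_or_gt (1 / 2) k with hk | hk
  · apply first
    have := Real.rpow_le_rpow hv.le hvB.le (by linarith : 0 ≤ k - 1 / 2)
    linarith
  rcases le_or_gt (B / 2) v with hv2 | hv2
  · apply first
    exact (Real.rpow_le_rpow_of_nonpos (by positivity) hv2 (by linarith)).trans
      (half_rpow_le (by linarith))
  · have h1 : v ^ (k - 1 / 2) ≤ (v - A) ^ (k - 1 / 2) :=
      Real.rpow_le_rpow_of_nonpos hva (by linarith) (by linarith)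
    have h2 : (B - v) ^ (-(1 / 2) : ℝ) ≤ 2 * B ^ (-(1 / 2) : ℝ) :=
      (Real.rpow_le_rpow_of_nonpos (x := B / 2) (by positivity) (by linarith) (by norm_num)).trans
        (half_rpow_le (by norm_num))
    calc v ^ (k - 1 / 2) * ((v - A) * (B - v)) ^ (-(1 / 2) : ℝ)
        = v ^ (k - 1 / 2) * ((v - A) ^ (-(1 / 2) : ℝ) * (B - v) ^ (-(1 / 2) : ℝ)) := by
          rw [Real.mul_rpow hva.le hbv.le]
      _ ≤ (v - A) ^ (k - 1 / 2) * ((v - A) ^ (-(1 / 2) : ℝ) * (2 * B ^ (-(1 / 2) : ℝ))) := by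
          gcongr
      _ = B ^ (k - 1 / 2) * (2 * B ^ (-k) * (v - A) ^ (k - 1)) := by
          rw [show k - 1 = (k - 1 / 2) + -(1 / 2) by ring, Real.rpow_add hva,
            show (-(1 / 2) : ℝ) = (k - 1 / 2) + -k by ring, Real.rpow_add hB]
          ring
      _ ≤ _ := by gcongr; linarith

/-- Behaviour of the weight under the inversion `u ↦ u⁻¹`. -/
lemma rpow_mul_inv_sqrt_eq_inv (k : ℝ) {a b u : ℝ} (ha : 0 < a) (hau : a < u) (hub : u < b) :
    u ^ (-k - 1 / 2) * ((b - u) * (u - a)) ^ (-(1 / 2) : ℝ) =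
      (a * b) ^ (-(1 / 2) : ℝ) * (u ^ 2)⁻¹ *
        (u⁻¹ ^ (k - 1 / 2) * ((u⁻¹ - b⁻¹) * (a⁻¹ - u⁻¹)) ^ (-(1 / 2) : ℝ)) := by
  have hu : 0 < u := ha.trans hau
  have hb : 0 < b := hu.trans hub
  have hp : 0 < (b - u) * (u - a) := mul_pos (by linarith) (by linarith)
  have e : (u⁻¹ - b⁻¹) * (a⁻¹ - u⁻¹) = (b - u) * (u - a) * (a * b)⁻¹ * (u⁻¹ ^ (2 : ℝ)) := by
    rw [Real.rpow_two]; field_simp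
  rw [e, Real.mul_rpow (x := _ * _ * _) (by positivity) (by positivity),
    Real.mul_rpow (y := (a * b)⁻¹) hp.le (by positivity),
    ← Real.rpow_mul (by positivity), Real.inv_rpow (x := a * b) (by positivity), Real.inv_rpow hu.le,
    Real.inv_rpow hu.le, ← Real.rpow_neg hu.le, ← Real.rpow_neg hu.le,
    show -k - 1 / 2 = -2 + (-(k - 1 / 2) + -(2 * -(1 / 2))) by ring, Real.rpow_add hu,
    Real.rpow_add hu, Real.rpow_neg hu.le 2, Real.rpow_two]
  have : (a * b) ^ (-(1 / 2) : ℝ) ≠ 0 := by positivity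
  field_simp

theorem spherical_mean_weight_bound (k : ℝ) (hk : 0 < k) :
    ∃ N : ℝ, 0 < N ∧ ∀ r t : ℝ, 0 < r → 0 < t →
      (∫ l in |r - t|..(r + t),
        Real.cosh l ^ (-k - 1 / 2 : ℝ) * Real.sinh l *
          ((Real.cosh (r + t) - Real.cosh l) *
            (Real.cosh l - Real.cosh (r - t))) ^ (-(1 / 2) : ℝ))
      ≤ Real.pi * N * Real.cosh (t + r) ^ (-(1 / 2) : ℝ) * Real.cosh (t - r) ^ (-k) := by
  refine ⟨2 + 2 / (k * Real.pi), by positivity, fun r t hr ht => ?_⟩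
  rw [add_comm t r, ← Real.cosh_neg (t - r), neg_sub]
  set a := Real.cosh (r - t) with ha
  set b := Real.cosh (r + t) with hb
  have ha0 : 0 < a := Real.cosh_pos _
  have hb0 : 0 < b := Real.cosh_pos _
  have hlt : |r - t| < r + t := by rw [abs_lt]; constructor <;> linarith
  have hab : a < b := by
    rw [ha, hb, Real.cosh_lt_cosh, abs_of_pos (add_pos hr ht)]; exact hlt
  by_cases hint : IntervalIntegrable (fun l => Real.cosh l ^ (-k - 1 / 2 : ℝ) * Real.sinh l *
      ((b - Real.cosh l) * (Real.cosh l - a)) ^ (-(1 / 2) : ℝ)) volume |r - t| (r + t)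
  swap
  · rw [integral_undef hint]; positivity
  set A := b⁻¹ with hAdef
  set B := a⁻¹ with hBdef
  have hA0 : 0 < A := inv_pos.2 hb0
  have hAB : A < B := inv_strictAnti₀ ha0 hab
  have hB0 : 0 < B := hA0.trans hAB
  set C := (a * b) ^ (-(1 / 2) : ℝ) * B ^ (k - 1 / 2) with hC
  have hC0 : 0 < C := by positivity
  have hCeq : C = b ^ (-(1 / 2) : ℝ) * a ^ (-k) := by
    rw [hC, hBdef, Real.inv_rpow ha0.le, ← Real.rpow_neg ha0.le, Real.mul_rpow ha0.le hb0.le,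
      show -k = -(1 / 2) + -(k - 1 / 2) by ring, Real.rpow_add ha0]
    ring
  let H : ℝ → ℝ := fun v => 2 * Real.arcsin ((2 * v - A - B) / (B - A))
    + 2 * B ^ (-k) * ((v - A) ^ k / k)
  have hHcont : Continuous H := by
    have : Continuous fun v : ℝ => (v - A) ^ k :=
      (continuous_id.sub continuous_const).rpow_const fun _ => Or.inr hk.le
    exact (continuous_const.mul (Real.continuous_arcsin.comp (by fun_prop))).add
      (continuous_const.mul (this.div_const k))
  have hHderiv {v : ℝ} (h1 : A < v) (h2 : v < B) : HasDerivAt H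
      (2 * ((v - A) * (B - v)) ^ (-(1 / 2) : ℝ) + 2 * B ^ (-k) * (v - A) ^ (k - 1)) v := by
    have hpow : HasDerivAt (fun v : ℝ => (v - A) ^ k / k) ((v - A) ^ (k - 1)) v := by
      refine ((((hasDerivAt_id v).sub_const A).rpow_const (p := k)
        (Or.inl (sub_pos.2 h1).ne')).div_const k).congr_deriv ?_
      simp only [id]
      field_simp
    exact ((hasDerivAt_arcsin_rescale h1 h2).const_mul 2).add (hpow.const_mul _)
  have hHle : H B - H A ≤ 2 * Real.pi + 2 / k := by
    have e1 := Real.arcsin_le_pi_div_two ((2 * B - A - B) / (B - A))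
    have e2 := Real.neg_pi_div_two_le_arcsin ((2 * A - A - B) / (B - A))
    have e3 : 2 * B ^ (-k) * ((B - A) ^ k / k) ≤ 2 / k := by
      have : (B - A) ^ k ≤ B ^ k := Real.rpow_le_rpow (by linarith) (by linarith) hk.le
      calc 2 * B ^ (-k) * ((B - A) ^ k / k) ≤ 2 * B ^ (-k) * (B ^ k / k) := by gcongr
        _ = 2 / k := by
          rw [Real.rpow_neg hB0.le]
          field_simp
    simp only [H, sub_self, Real.zero_rpow hk.ne', zero_div, mul_zero]
    linarith
  have key := integral_le_sub_of_hasDeriv_right_of_le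
    (g := fun l => -C * H (Real.cosh l)⁻¹)
    (g' := fun l => -C * ((2 * (((Real.cosh l)⁻¹ - A) * (B - (Real.cosh l)⁻¹)) ^ (-(1 / 2) : ℝ)
      + 2 * B ^ (-k) * ((Real.cosh l)⁻¹ - A) ^ (k - 1)) * (-Real.sinh l / Real.cosh l ^ 2)))
    (φ := fun l => Real.cosh l ^ (-k - 1 / 2 : ℝ) * Real.sinh l *
      ((b - Real.cosh l) * (Real.cosh l - a)) ^ (-(1 / 2) : ℝ)) hlt.le ?_ ?_
    ((intervalIntegrable_iff_integrableOn_Icc_of_le hlt.le).1 hint) ?_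
  · refine key.trans ?_
    simp only [Real.cosh_abs, ← ha, ← hb, ← hAdef, ← hBdef]
    calc -C * H A - -C * H B = C * (H B - H A) := by ring
      _ ≤ C * (2 * Real.pi + 2 / k) := by gcongr
      _ = _ := by rw [hCeq]; field_simp
  · exact (continuous_const.mul (hHcont.comp
      (Real.continuous_cosh.inv₀ fun l => (Real.cosh_pos l).ne'))).continuousOn
  all_goals
    intro l hl
    have hl0 : 0 < l := (abs_nonneg _).trans_lt hl.1
    have hal : a < Real.cosh l := by
      rw [ha, Real.cosh_lt_cosh, abs_of_pos hl0]; exact hl.1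
    have hlb : Real.cosh l < b := by
      rw [hb, Real.cosh_lt_cosh, abs_of_pos hl0, abs_of_pos (add_pos hr ht)]; exact hl.2
    have hc0 := Real.cosh_pos l
    have hAv : A < (Real.cosh l)⁻¹ := inv_strictAnti₀ hc0 hlb
    have hvB : (Real.cosh l)⁻¹ < B := inv_strictAnti₀ ha0 hal
  · exact (((hHderiv hAv hvB).comp l ((Real.hasDerivAt_cosh l).inv hc0.ne')).const_mul
      (-C)).hasDerivWithinAt
  · have hs : 0 < Real.sinh l := Real.sinh_pos_iff.2 hl0
    have hdom := rpow_mul_inv_sqrt_le hk hA0 hAv hvB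
    calc _ = Real.sinh l * (Real.cosh l ^ (-k - 1 / 2) *
          ((b - Real.cosh l) * (Real.cosh l - a)) ^ (-(1 / 2) : ℝ)) := by ring
      _ ≤ Real.sinh l * ((a * b) ^ (-(1 / 2) : ℝ) * (Real.cosh l ^ 2)⁻¹ *
          (B ^ (k - 1 / 2) * (2 * (((Real.cosh l)⁻¹ - A) * (B - (Real.cosh l)⁻¹)) ^ (-(1 / 2) : ℝ)
        + 2 * B ^ (-k) * ((Real.cosh l)⁻¹ - A) ^ (k - 1)))) := by
          rw [rpow_mul_inv_sqrt_eq_inv k ha0 hal hlb]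
          gcongr
      _ = _ := by rw [hC]; ring
end

section
/- Let k > 0. There exists a constant N_k > 0 such that for all r, t > 0: ∫_{|r−t|}^{r+t} (cosh λ)^{−k−1/2} sinh λ · (2cosh(r+λ) − 2cosh t)^{−1/2} dλ ≤ N_k (cosh r)^{−1/2} (cosh(t−r))^{−k}. -/
open MeasureTheory intervalIntegral

lemma two_mul_cosh_sub_two_mul_cosh (x y : ℝ) :
    2 * Real.cosh x - 2 * Real.cosh y =
      (2 * Real.sinh ((x + y) / 2)) * (2 * Real.sinh ((x - y) / 2)) := by
  have h1 : Real.cosh x = Real.cosh ((x + y) / 2 + (x - y) / 2) := by ring_nf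
  have h2 : Real.cosh y = Real.cosh ((x + y) / 2 - (x - y) / 2) := by ring_nf
  rw [h1, h2, Real.cosh_add, Real.cosh_sub]
  ring

lemma div_one_add_le_one_sub_exp_neg {s : ℝ} (hs : 0 ≤ s) :
    s / (1 + s) ≤ 1 - Real.exp (-s) := by
  have h := Real.add_one_le_exp s
  have h2 : Real.exp (-s) ≤ 1 / (1 + s) := by
    rw [Real.exp_neg, ← one_div]
    exact one_div_le_one_div_of_le (by linarith) (by linarith)
  have h3 : s / (1 + s) = 1 - 1 / (1 + s) := by field_simp; ring
  linarith

/-- Lower bound for the quantity under the square root in the kernel. -/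
lemma cosh_mul_sinh_sq_div_cosh_le {r t l : ℝ} (hl : |r - t| < l) (hl' : l ≤ r + t) :
    Real.cosh r * (Real.sinh l ^ 2 / Real.cosh l) * ((l - |r - t|) / (1 + (l - |r - t|))) ≤
      2 * Real.cosh (r + l) - 2 * Real.cosh t := by
  have ha := abs_nonneg (r - t)
  have ha' := neg_abs_le (r - t)
  have hr : 0 ≤ r := by
    have := le_abs_self (t - r)
    rw [abs_sub_comm] at this
    linarith
  set s := l - |r - t| with hs
  have hs0 : 0 < s := by linarith
  have hsl : 0 < Real.sinh l := Real.sinh_pos_iff.2 (by linarith)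
  have hcl := Real.cosh_pos l
  rw [two_mul_cosh_sub_two_mul_cosh]
  set A := (r + l + t) / 2 with hA
  set B := (r + l - t) / 2 with hB
  have hAB : Real.exp A * Real.exp B = Real.exp r * Real.exp l := by
    rw [← Real.exp_add, ← Real.exp_add]; congr 1; rw [hA, hB]; ring
  have hsA : 0 < Real.sinh A := Real.sinh_pos_iff.2 (by linarith)
  have h1 : Real.exp A * (Real.sinh l / Real.cosh l) ≤ 2 * Real.sinh A := by
    rw [← mul_div_assoc, div_le_iff₀ hcl]
    have h0 : 0 ≤ Real.sinh (A - l) := Real.sinh_nonneg_iff.2 (by linarith)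
    rw [Real.sinh_sub] at h0
    have hlt := mul_le_mul_of_nonneg_left (Real.sinh_lt_cosh l).le hsA.le
    rw [← Real.cosh_add_sinh A]
    linarith
  have h2 : Real.exp B * (s / (1 + s)) ≤ 2 * Real.sinh B := by
    have e : 2 * Real.sinh B = Real.exp B * (1 - Real.exp (-(2 * B))) := by
      rw [Real.sinh_eq, mul_sub, ← Real.exp_add]; ring_nf
    rw [e]
    have hm : Real.exp (-(2 * B)) ≤ Real.exp (-s) := Real.exp_le_exp.2 (by linarith)
    have := div_one_add_le_one_sub_exp_neg hs0.le
    exact mul_le_mul_of_nonneg_left (by linarith) (Real.exp_pos B).le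
  have hcr : Real.cosh r ≤ Real.exp r := by
    rw [← Real.cosh_add_sinh]; linarith [Real.sinh_nonneg_iff.2 hr]
  have hsle : Real.sinh l ≤ Real.exp l := by
    rw [← Real.cosh_add_sinh]; linarith
  calc Real.cosh r * (Real.sinh l ^ 2 / Real.cosh l) * (s / (1 + s))
      = Real.cosh r * Real.sinh l * ((Real.sinh l / Real.cosh l) * (s / (1 + s))) := by ring
    _ ≤ Real.exp r * Real.exp l * ((Real.sinh l / Real.cosh l) * (s / (1 + s))) := by
        gcongr
    _ = (Real.exp A * (Real.sinh l / Real.cosh l)) * (Real.exp B * (s / (1 + s))) := by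
        rw [← hAB]; ring
    _ ≤ _ := mul_le_mul h1 h2 (by positivity) (by positivity)

lemma div_one_add_rpow_neg_half_le {s : ℝ} (hs : 0 < s) :
    (s / (1 + s)) ^ (-(1 / 2) : ℝ) ≤ s ^ (-(1 / 2) : ℝ) + 1 := by
  have h1 : (1 + s) ^ (1 / 2 : ℝ) ≤ 1 + s ^ (1 / 2 : ℝ) := by
    simpa using Real.rpow_add_le_add_rpow (p := 1 / 2) zero_le_one hs.le (by norm_num) (by norm_num)
  have h2 : s ^ (-(1 / 2) : ℝ) * s ^ (1 / 2 : ℝ) = 1 := by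
    rw [← Real.rpow_add hs]; norm_num
  calc (s / (1 + s)) ^ (-(1 / 2) : ℝ) = s ^ (-(1 / 2) : ℝ) * (1 + s) ^ (1 / 2 : ℝ) := by
        rw [Real.div_rpow hs.le (by positivity), Real.rpow_neg (by positivity : 0 ≤ 1 + s),
          div_inv_eq_mul]
    _ ≤ s ^ (-(1 / 2) : ℝ) * (1 + s ^ (1 / 2 : ℝ)) := by gcongr
    _ = s ^ (-(1 / 2) : ℝ) + 1 := by rw [mul_add, h2]; ring

lemma cosh_rpow_neg_le {k a l : ℝ} (hk : 0 < k) (ha : 0 ≤ a) :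
    Real.cosh l ^ (-k) ≤ 2 ^ k * Real.cosh a ^ (-k) * Real.exp (-k * (l - a)) := by
  have hca : Real.cosh a ≤ Real.exp a := by
    rw [← Real.cosh_add_sinh]; linarith [Real.sinh_nonneg_iff.2 ha]
  have h1 : Real.cosh a / 2 * Real.exp (l - a) ≤ Real.cosh l := by
    calc Real.cosh a / 2 * Real.exp (l - a) ≤ Real.exp a / 2 * Real.exp (l - a) := by gcongr
      _ = Real.exp l / 2 := by rw [div_mul_eq_mul_div, ← Real.exp_add]; ring_nf
      _ ≤ Real.cosh l := by rw [Real.cosh_eq]; linarith [Real.exp_pos (-l)]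
  have hc := Real.cosh_pos a
  calc Real.cosh l ^ (-k) ≤ (Real.cosh a / 2 * Real.exp (l - a)) ^ (-k) :=
        Real.rpow_le_rpow_of_nonpos (by positivity) h1 (by linarith)
    _ = _ := by
        rw [Real.mul_rpow (by positivity) (by positivity), Real.div_rpow hc.le (by norm_num),
          ← Real.exp_mul, Real.rpow_neg (by norm_num : (0 : ℝ) ≤ 2), div_inv_eq_mul,
          mul_comm (l - a)]
        ring

lemma kernel_le {k r t l : ℝ} (hk : 0 < k) (hl : |r - t| < l) (hl' : l ≤ r + t) :
    Real.cosh l ^ (-k - 1 / 2 : ℝ) * Real.sinh l *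
        (2 * Real.cosh (r + l) - 2 * Real.cosh t) ^ (-(1 / 2) : ℝ) ≤
      2 ^ k * Real.cosh r ^ (-(1 / 2) : ℝ) * Real.cosh (t - r) ^ (-k) *
        (((l - |r - t|) ^ (-(1 / 2) : ℝ) + 1) * Real.exp (-k * (l - |r - t|))) := by
  have ha := abs_nonneg (r - t)
  have hD := cosh_mul_sinh_sq_div_cosh_le hl hl'
  have hcosh : Real.cosh (t - r) = Real.cosh |r - t| := by
    rw [Real.cosh_abs, ← Real.cosh_neg, neg_sub]
  have hK := cosh_rpow_neg_le (l := l) hk ha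
  rw [hcosh]
  set s := l - |r - t| with hs
  have hs0 : 0 < s := by linarith
  have hsl : 0 < Real.sinh l := Real.sinh_pos_iff.2 (by linarith)
  have hcl := Real.cosh_pos l
  have hcr := Real.cosh_pos r
  have hroot : (Real.sinh l ^ 2) ^ (-(1 / 2) : ℝ) = (Real.sinh l)⁻¹ := by
    rw [← Real.rpow_natCast, ← Real.rpow_mul hsl.le, ← Real.rpow_neg_one]; norm_num
  have hE : (2 * Real.cosh (r + l) - 2 * Real.cosh t) ^ (-(1 / 2) : ℝ) ≤
      Real.cosh r ^ (-(1 / 2) : ℝ) * ((Real.sinh l)⁻¹ * Real.cosh l ^ (1 / 2 : ℝ)) *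
        (s / (1 + s)) ^ (-(1 / 2) : ℝ) := by
    refine (Real.rpow_le_rpow_of_nonpos (by positivity) hD (by norm_num)).trans_eq ?_
    rw [Real.mul_rpow (by positivity) (by positivity), Real.mul_rpow hcr.le (by positivity),
      Real.div_rpow (by positivity) hcl.le, hroot, Real.rpow_neg hcl.le, div_inv_eq_mul]
  have hcc : Real.cosh l ^ (-k - 1 / 2 : ℝ) * Real.cosh l ^ (1 / 2 : ℝ) = Real.cosh l ^ (-k) := by
    rw [← Real.rpow_add hcl]; congr 1; ring
  calc _ ≤ Real.cosh l ^ (-k - 1 / 2 : ℝ) * Real.sinh l *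
        (Real.cosh r ^ (-(1 / 2) : ℝ) * ((Real.sinh l)⁻¹ * Real.cosh l ^ (1 / 2 : ℝ)) *
        (s / (1 + s)) ^ (-(1 / 2) : ℝ)) := by gcongr
    _ = Real.cosh r ^ (-(1 / 2) : ℝ) * Real.cosh l ^ (-k) *
        (s / (1 + s)) ^ (-(1 / 2) : ℝ) := by
        rw [← hcc]; field_simp
    _ ≤ Real.cosh r ^ (-(1 / 2) : ℝ) *
        (2 ^ k * Real.cosh |r - t| ^ (-k) * Real.exp (-k * s)) * (s ^ (-(1 / 2) : ℝ) + 1) := by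
        gcongr
        exact div_one_add_rpow_neg_half_le hs0
    _ = _ := by ring

lemma integrableOn_rpow_neg_half_add_one_mul_exp {k : ℝ} (hk : 0 < k) :
    IntegrableOn (fun s : ℝ => (s ^ (-(1 / 2) : ℝ) + 1) * Real.exp (-k * s)) (Set.Ioi 0) := by
  have h1 := integrableOn_rpow_mul_exp_neg_mul_rpow (p := 1) (s := -(1 / 2)) (by norm_num)
    one_pos hk
  have h2 := exp_neg_integrableOn_Ioi 0 hk
  refine (h1.add h2).congr_fun (fun x _ => ?_) measurableSet_Ioi
  simp [add_mul]

theorem weighted_kernel_bound (k : ℝ) (hk : 0 < k) :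
    ∃ N : ℝ, 0 < N ∧ ∀ r t : ℝ, 0 < r → 0 < t →
      (∫ l in |r - t|..(r + t),
        Real.cosh l ^ (-k - 1 / 2 : ℝ) * Real.sinh l *
          (2 * Real.cosh (r + l) - 2 * Real.cosh t) ^ (-(1 / 2) : ℝ))
      ≤ N * Real.cosh r ^ (-(1 / 2) : ℝ) * Real.cosh (t - r) ^ (-k) := by
  set h : ℝ → ℝ := fun s => (s ^ (-(1 / 2) : ℝ) + 1) * Real.exp (-k * s) with hh
  have hint : IntegrableOn h (Set.Ioi 0) := integrableOn_rpow_neg_half_add_one_mul_exp hk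
  have hpos : ∀ s ∈ Set.Ioi (0 : ℝ), 0 ≤ h s := fun s hs => by
    have : 0 < s := hs
    simp only [hh]; positivity
  have hI : 0 ≤ ∫ s in Set.Ioi 0, h s := setIntegral_nonneg measurableSet_Ioi hpos
  refine ⟨2 ^ k * ((∫ s in Set.Ioi 0, h s) + 1), by positivity, fun r t hr ht => ?_⟩
  have hle : |r - t| ≤ r + t := abs_le.2 ⟨by linarith, by linarith⟩
  set C : ℝ := 2 ^ k * Real.cosh r ^ (-(1 / 2) : ℝ) * Real.cosh (t - r) ^ (-k) with hC
  have hC0 : 0 ≤ C := by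
    have := Real.cosh_pos r
    have := Real.cosh_pos (t - r)
    positivity
  have hloc : IntervalIntegrable h volume 0 (r + t - |r - t|) := by
    rw [intervalIntegrable_iff_integrableOn_Ioc_of_le (by linarith)]
    exact hint.mono_set Set.Ioc_subset_Ioi_self
  have hshift : IntervalIntegrable (fun l => C * h (l - |r - t|)) volume |r - t| (r + t) := by
    simpa using (hloc.comp_sub_right |r - t|).const_mul C
  calc _ ≤ ∫ l in |r - t|..(r + t), C * h (l - |r - t|) := by
        rw [integral_of_le hle, integral_of_le hle]
        refine integral_mono_of_nonneg ?_ hshift.1 ?_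
        · refine (ae_restrict_iff' measurableSet_Ioc).2 (.of_forall fun l hl => ?_)
          have hl0 : 0 < l := (abs_nonneg _).trans_lt hl.1
          have hsl : 0 < Real.sinh l := Real.sinh_pos_iff.2 hl0
          have hcl := Real.cosh_pos l
          have hs0 : 0 < l - |r - t| := sub_pos.2 hl.1
          have hD := cosh_mul_sinh_sq_div_cosh_le hl.1 hl.2
          have hD0 : 0 ≤ 2 * Real.cosh (r + l) - 2 * Real.cosh t :=
            le_trans (by have := Real.cosh_pos r; positivity) hD
          simp only [Pi.zero_apply]
          positivity
        · exact (ae_restrict_iff' measurableSet_Ioc).2 (.of_forall fun l hl =>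
            kernel_le hk hl.1 hl.2)
    _ = C * ∫ s in Set.Ioc 0 (r + t - |r - t|), h s := by
        rw [intervalIntegral.integral_const_mul, integral_comp_sub_right, sub_self,
          integral_of_le (by linarith)]
    _ ≤ C * ((∫ s in Set.Ioi 0, h s) + 1) := by
        gcongr
        refine (setIntegral_mono_set hint ?_ Set.Ioc_subset_Ioi_self.eventuallyLE).trans
          (by linarith)
        exact (ae_restrict_iff' measurableSet_Ioi).2 (.of_forall hpos)
    _ = _ := by rw [hC]; ring
end

section
/- Let k > 0 and define K_k(s) = (cosh s)^{1/2−k} if 0 < k < 1/2, K_k(s) = ⟨s⟩ if k = 1/2, and K_k(s) = 1 if k > 1/2. There exists a constant N_k > 0 such that for all t > r ≥ 0 with t − r ≥ 1: ∫_0^{t−r} (cosh λ)^{−k−1/2} sinh λ · (cosh t − cosh(r+λ))^{−1/2} dλ ≤ N_k (cosh r)^{−1/2} (cosh(t−r))^{−1/2} K_k(t−r). -/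
open MeasureTheory intervalIntegral

/-- The factor `K_k(s)`: `(cosh s)^{1/2-k}` for `0 < k < 1/2`, `⟨s⟩` for `k = 1/2`,
and `1` for `k > 1/2`. -/
noncomputable def Kfac (k s : ℝ) : ℝ :=
  if k < 1 / 2 then Real.cosh s ^ (1 / 2 - k : ℝ)
  else if k = 1 / 2 then Real.sqrt (1 + s ^ 2)
  else 1

/-- An antiderivative of `u ^ (-k - 1/2)` whose growth along `cosh` is controlled by `Kfac`. -/
lemma exists_antideriv_rpow_le_Kfac (k : ℝ) :
    ∃ (F : ℝ → ℝ) (C : ℝ), 0 < C ∧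
      (∀ u : ℝ, 0 < u → HasDerivAt F (u ^ (-k - 1 / 2 : ℝ)) u) ∧
      ∀ s : ℝ, 0 ≤ s → F (Real.cosh s) - F 1 ≤ C * Kfac k s := by
  by_cases hk : k = 1 / 2
  · subst hk
    refine ⟨Real.log, 1, one_pos, fun u hu => ?_, fun s hs => ?_⟩
    · refine (Real.hasDerivAt_log hu.ne').congr_deriv ?_
      norm_num [Real.rpow_neg_one]
    · have h1 : Real.cosh s ≤ Real.exp s := by
        rw [Real.cosh_eq]
        have : Real.exp (-s) ≤ Real.exp s := Real.exp_le_exp.2 (by linarith)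
        linarith
      have h2 : Real.log (Real.cosh s) ≤ s :=
        (Real.log_le_iff_le_exp (Real.cosh_pos s)).2 h1
      have h3 : s ≤ Real.sqrt (1 + s ^ 2) := Real.le_sqrt_of_sq_le (by linarith)
      simp only [Kfac, lt_irrefl, if_false, if_true, Real.log_one]
      linarith
  · have hk' : (1 / 2 - k : ℝ) ≠ 0 := fun h => hk (by linarith)
    refine ⟨fun u => u ^ (1 / 2 - k : ℝ) / (1 / 2 - k), |1 / 2 - k|⁻¹,
      inv_pos.2 (abs_pos.2 hk'), fun u hu => ?_, fun s _ => ?_⟩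
    · refine ((Real.hasDerivAt_rpow_const (p := 1 / 2 - k) (Or.inl hu.ne')).div_const
        (1 / 2 - k)).congr_deriv ?_
      rw [mul_div_cancel_left₀ _ hk']
      congr 1
      ring
    · rcases lt_or_gt_of_ne hk with h | h
      · have hp : 0 < 1 / 2 - k := by linarith
        simp only [Kfac, if_pos h, Real.one_rpow, abs_of_pos hp]
        rw [div_eq_inv_mul]
        have : 0 < 1 / (1 / 2 - k) := one_div_pos.2 hp
        linarith
      · have hp : 1 / 2 - k < 0 := by linarith
        simp only [Kfac, if_neg h.not_gt, if_neg hk, Real.one_rpow, abs_of_neg hp]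
        have h0 : Real.cosh s ^ (1 / 2 - k : ℝ) / (1 / 2 - k) ≤ 0 :=
          div_nonpos_of_nonneg_of_nonpos (Real.rpow_nonneg (Real.cosh_pos s).le _) hp.le
        have : (-(1 / 2 - k))⁻¹ = - (1 / (1 / 2 - k)) := by rw [inv_neg, one_div (1 / 2 - k)]
        linarith

lemma cosh_rpow_neg_le_Kfac (k s : ℝ) :
    Real.cosh s ^ (-k) ≤ Real.cosh s ^ (-(1 / 2) : ℝ) * Kfac k s := by
  have hS := Real.one_le_cosh s
  rcases lt_or_ge k (1 / 2) with h | h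
  · rw [Kfac, if_pos h, ← Real.rpow_add (Real.cosh_pos s)]
    exact le_of_eq (by congr 1; ring)
  · have hK : 1 ≤ Kfac k s := by
      unfold Kfac
      rw [if_neg h.not_gt]
      split_ifs
      · exact Real.one_le_sqrt.2 (by nlinarith [sq_nonneg s])
      · exact le_rfl
    calc Real.cosh s ^ (-k) ≤ Real.cosh s ^ (-(1 / 2) : ℝ) :=
          Real.rpow_le_rpow_of_exponent_le hS (by linarith)
      _ ≤ _ := le_mul_of_one_le_right (Real.rpow_nonneg (Real.cosh_pos s).le _) hK

/-- A product of negative powers of `u` and `S - u` is bounded by freezing, in turn, the factor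
whose base is at least `S / 2`. -/
lemma rpow_mul_rpow_sub_le {S u a b : ℝ} (hu : 0 < u) (huS : u < S) (ha : a ≤ 0) (hb : b ≤ 0) :
    u ^ a * (S - u) ^ b ≤ (S / 2) ^ b * u ^ a + (S / 2) ^ a * (S - u) ^ b := by
  have hS : 0 < S / 2 := by linarith
  have hd : 0 < S - u := by linarith
  have hua := Real.rpow_nonneg hu.le a
  have hdb := Real.rpow_nonneg hd.le b
  rcases le_total u (S / 2) with h | h
  · have := Real.rpow_le_rpow_of_nonpos hS (by linarith : S / 2 ≤ S - u) hb
    nlinarith [mul_nonneg (Real.rpow_nonneg hS.le a) hdb]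
  · have := Real.rpow_le_rpow_of_nonpos hS h ha
    nlinarith [mul_nonneg (Real.rpow_nonneg hS.le b) hua]

lemma cosh_mul_sub_le {r s l : ℝ} (hr : 0 ≤ r) (hls : l ≤ s) :
    Real.cosh r * (Real.cosh s - Real.cosh l) ≤ Real.cosh (r + s) - Real.cosh (r + l) := by
  rw [Real.cosh_add, Real.cosh_add]
  nlinarith [mul_nonneg (Real.sinh_nonneg_iff.2 hr) (sub_nonneg.2 (Real.sinh_le_sinh.2 hls))]

theorem interior_kernel_bound (k : ℝ) (hk : 0 < k) :
    ∃ N : ℝ, 0 < N ∧ ∀ r t : ℝ, 0 ≤ r → r < t → 1 ≤ t - r →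
      (∫ l in (0 : ℝ)..(t - r),
        Real.cosh l ^ (-k - 1 / 2 : ℝ) * Real.sinh l *
          (Real.cosh t - Real.cosh (r + l)) ^ (-(1 / 2) : ℝ))
      ≤ N * Real.cosh r ^ (-(1 / 2) : ℝ) * Real.cosh (t - r) ^ (-(1 / 2) : ℝ)
          * Kfac k (t - r) := by
  obtain ⟨F, C, hC, hF, hFK⟩ := exists_antideriv_rpow_le_Kfac k
  refine ⟨2 ^ (1 / 2 : ℝ) * C + 2 * 2 ^ (k + 1 / 2), by positivity, fun r t hr hrt _ => ?_⟩
  obtain ⟨s, rfl⟩ : ∃ s, t = r + s := ⟨t - r, by ring⟩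
  rw [add_sub_cancel_left]
  have hs : 0 < s := by linarith
  set S := Real.cosh s with hSdef
  have hS1 : 1 ≤ S := Real.one_le_cosh s
  have hS0 : 0 < S := by linarith
  set R := Real.cosh r ^ (-(1 / 2) : ℝ) with hRdef
  have hR : 0 ≤ R := Real.rpow_nonneg (Real.cosh_pos r).le _
  have hcosh_lt : ∀ l ∈ Set.Ioo 0 s, Real.cosh l < S := fun l hl =>
    Real.cosh_lt_cosh.2 (by rw [abs_of_pos hl.1, abs_of_pos hs]; exact hl.2)
  -- the antiderivative of the dominating function
  set G : ℝ → ℝ := fun l => R * ((S / 2) ^ (-(1 / 2) : ℝ) * F (Real.cosh l)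
    - 2 * (S / 2) ^ (-k - 1 / 2 : ℝ) * (S - Real.cosh l) ^ (1 / 2 : ℝ)) with hGdef
  set g : ℝ → ℝ := fun l => R * (((S / 2) ^ (-(1 / 2) : ℝ) * Real.cosh l ^ (-k - 1 / 2 : ℝ)
    + (S / 2) ^ (-k - 1 / 2 : ℝ) * (S - Real.cosh l) ^ (-(1 / 2) : ℝ)) * Real.sinh l)
  have hFd : ∀ l, HasDerivAt (fun l => F (Real.cosh l))
      (Real.cosh l ^ (-k - 1 / 2 : ℝ) * Real.sinh l) l := fun l =>
    (hF _ (Real.cosh_pos l)).comp l (Real.hasDerivAt_cosh l)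
  have hGd : ∀ l ∈ Set.Ioo 0 s, HasDerivAt G (g l) l := by
    intro l hl
    have hne : S - Real.cosh l ≠ 0 := (sub_pos.2 (hcosh_lt l hl)).ne'
    have h2 := ((Real.hasDerivAt_cosh l).const_sub S).rpow_const (p := 1 / 2) (Or.inl hne)
    refine ((((hFd l).const_mul ((S / 2) ^ (-(1 / 2) : ℝ))).sub
      (h2.const_mul (2 * (S / 2) ^ (-k - 1 / 2 : ℝ)))).const_mul R).congr_deriv ?_
    rw [show (1 / 2 - 1 : ℝ) = -(1 / 2) by norm_num]
    ring
  have hGc : ContinuousOn G (Set.Icc 0 s) := by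
    have h1 : Continuous fun l => F (Real.cosh l) :=
      continuous_iff_continuousAt.2 fun l => (hFd l).continuousAt
    have h2 : Continuous fun l => (S - Real.cosh l) ^ (1 / 2 : ℝ) :=
      (continuous_const.sub Real.continuous_cosh).rpow_const fun _ => Or.inr (by norm_num)
    exact (continuous_const.mul ((continuous_const.mul h1).sub
      (continuous_const.mul h2))).continuousOn
  have hg0 : ∀ l ∈ Set.Ioo 0 s, 0 ≤ g l := by
    intro l hl
    have h1 := (sub_pos.2 (hcosh_lt l hl)).le
    have h2 := Real.sinh_nonneg_iff.2 hl.1.le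
    have h3 := (Real.cosh_pos l).le
    positivity
  have hgi : IntegrableOn g (Set.Ioc 0 s) := integrableOn_deriv_of_nonneg hGc hGd hg0
  have hgI : ∫ l in (0 : ℝ)..s, g l = G s - G 0 :=
    integral_eq_sub_of_hasDerivAt_of_le hs.le hGc hGd
      ((intervalIntegrable_iff_integrableOn_Ioc_of_le hs.le).2 hgi)
  have hle : (∫ l in (0 : ℝ)..s, Real.cosh l ^ (-k - 1 / 2 : ℝ) * Real.sinh l *
      (Real.cosh (r + s) - Real.cosh (r + l)) ^ (-(1 / 2) : ℝ)) ≤ ∫ l in (0 : ℝ)..s, g l := by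
    rw [integral_of_le hs.le, integral_of_le hs.le, integral_Ioc_eq_integral_Ioo,
      integral_Ioc_eq_integral_Ioo]
    refine integral_mono_of_nonneg ?_ (hgi.mono_set Set.Ioo_subset_Ioc_self) ?_
    all_goals
      refine (ae_restrict_mem measurableSet_Ioo).mono fun l hl => ?_
      have hd := sub_pos.2 (hcosh_lt l hl)
      have hsh := Real.sinh_nonneg_iff.2 hl.1.le
      have hc := Real.cosh_pos l
      have hlow := cosh_mul_sub_le hr hl.2.le
      have hpos := mul_pos (Real.cosh_pos r) hd
    · exact mul_nonneg (mul_nonneg (Real.rpow_nonneg hc.le _) hsh)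
        (Real.rpow_nonneg (hpos.le.trans hlow) _)
    · have h1 : (Real.cosh (r + s) - Real.cosh (r + l)) ^ (-(1 / 2) : ℝ)
          ≤ R * (S - Real.cosh l) ^ (-(1 / 2) : ℝ) := by
        rw [hRdef, ← Real.mul_rpow (Real.cosh_pos r).le hd.le]
        exact Real.rpow_le_rpow_of_nonpos hpos hlow (by norm_num)
      have h2 := rpow_mul_rpow_sub_le hc (hcosh_lt l hl) (by linarith : -k - 1 / 2 ≤ 0)
        (by norm_num : (-(1 / 2) : ℝ) ≤ 0)
      calc _ ≤ Real.cosh l ^ (-k - 1 / 2 : ℝ) * Real.sinh l *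
            (R * (S - Real.cosh l) ^ (-(1 / 2) : ℝ)) :=
          mul_le_mul_of_nonneg_left h1 (mul_nonneg (Real.rpow_nonneg hc.le _) hsh)
        _ = R * (Real.cosh l ^ (-k - 1 / 2 : ℝ) * (S - Real.cosh l) ^ (-(1 / 2) : ℝ)
            * Real.sinh l) := by ring
        _ ≤ g l :=
          mul_le_mul_of_nonneg_left (mul_le_mul_of_nonneg_right h2 hsh) hR
  have hGle : G s - G 0 ≤ R * ((S / 2) ^ (-(1 / 2) : ℝ) * (C * Kfac k s)
      + 2 * (S / 2) ^ (-k - 1 / 2 : ℝ) * S ^ (1 / 2 : ℝ)) := by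
    have h1 : G s - G 0 = R * ((S / 2) ^ (-(1 / 2) : ℝ) * (F S - F 1)
        + 2 * (S / 2) ^ (-k - 1 / 2 : ℝ) * (S - 1) ^ (1 / 2 : ℝ)) := by
      simp only [hGdef, Real.cosh_zero, ← hSdef, sub_self]
      rw [Real.zero_rpow (by norm_num)]
      ring
    rw [h1]
    have h2 := hFK s hs.le
    have h3 : (S - 1) ^ (1 / 2 : ℝ) ≤ S ^ (1 / 2 : ℝ) :=
      Real.rpow_le_rpow (by linarith) (by linarith) (by norm_num)
    gcongr
  have hhalf : (S / 2) ^ (-(1 / 2) : ℝ) = 2 ^ (1 / 2 : ℝ) * S ^ (-(1 / 2) : ℝ) := by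
    rw [Real.div_rpow hS0.le two_pos.le, Real.rpow_neg two_pos.le, div_inv_eq_mul, mul_comm]
  have hpow : (S / 2) ^ (-k - 1 / 2 : ℝ) * S ^ (1 / 2 : ℝ) = 2 ^ (k + 1 / 2) * S ^ (-k) := by
    rw [Real.div_rpow hS0.le two_pos.le, show -k - 1 / 2 = -(k + 1 / 2) by ring,
      Real.rpow_neg two_pos.le, div_inv_eq_mul, mul_right_comm, ← Real.rpow_add hS0, mul_comm]
    congr 2
    ring
  calc _ ≤ G s - G 0 := hle.trans_eq hgI
    _ ≤ _ := hGle
    _ = R * (2 ^ (1 / 2 : ℝ) * S ^ (-(1 / 2) : ℝ) * (C * Kfac k s)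
        + 2 * (2 ^ (k + 1 / 2) * S ^ (-k))) := by rw [mul_assoc 2, hhalf, hpow]
    _ ≤ R * (2 ^ (1 / 2 : ℝ) * S ^ (-(1 / 2) : ℝ) * (C * Kfac k s)
        + 2 * (2 ^ (k + 1 / 2) * (S ^ (-(1 / 2) : ℝ) * Kfac k s))) := by
      gcongr
      exact cosh_rpow_neg_le_Kfac k s
    _ = _ := by ring
end

section
/- For every continuous nonnegative function φ : [0,∞) → ℝ and all t, r > 0: I(t,r,φ) ≥ ∫_{|r−t|}^{r+t} φ(λ) sinh λ · (2cosh(r+λ))^{−1/2} dλ. -/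
open MeasureTheory intervalIntegral

/-- The radial form, at geodesic radius `r` and time `t`, of the solution of the shifted
wave equation on the hyperbolic plane with data `u(0) = 0`, `∂ₜu(0) = φ`. -/
noncomputable def Isol (t r : ℝ) (φ : ℝ → ℝ) : ℝ :=
  (1 / (Real.pi * Real.sqrt 2)) *
    ∫ s in (0 : ℝ)..t, ∫ l in |r - s|..(r + s),
      φ l * Real.sinh l * Real.sinh s *
        ((Real.cosh t - Real.cosh s) * (Real.cosh (r + s) - Real.cosh l) *
          (Real.cosh l - Real.cosh (r - s))) ^ (-(1 / 2) : ℝ)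

/-- The derivative of the arcsine primitive, after the substitution `σ = cosh x`. -/
lemma hasDerivAt_arcsin_cosh {α β x : ℝ} (hα : 0 ≤ α) (hx : x ∈ Set.Ioo α β) :
    HasDerivAt (fun x => Real.arcsin ((2 * Real.cosh x - Real.cosh α - Real.cosh β) /
        (Real.cosh β - Real.cosh α)))
      (Real.sinh x *
        ((Real.cosh β - Real.cosh x) * (Real.cosh x - Real.cosh α)) ^ (-(1 / 2) : ℝ)) x := by
  obtain ⟨hx1, hx2⟩ := hx
  have h1 : Real.cosh α < Real.cosh x := by
    rw [Real.cosh_lt_cosh, abs_of_nonneg hα, abs_of_nonneg (by linarith)]; exact hx1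
  have h2 : Real.cosh x < Real.cosh β := by
    rw [Real.cosh_lt_cosh, abs_of_nonneg (by linarith), abs_of_nonneg (by linarith)]; exact hx2
  have hd : 0 < Real.cosh β - Real.cosh α := by linarith
  have hin : HasDerivAt (fun x => (2 * Real.cosh x - Real.cosh α - Real.cosh β) /
      (Real.cosh β - Real.cosh α)) (2 * Real.sinh x / (Real.cosh β - Real.cosh α)) x :=
    ((((Real.hasDerivAt_cosh x).const_mul 2).sub_const _).sub_const _).div_const _
  have hne1 : (2 * Real.cosh x - Real.cosh α - Real.cosh β) /
      (Real.cosh β - Real.cosh α) ≠ -1 := by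
    intro h; rw [div_eq_iff hd.ne'] at h; linarith
  have hne2 : (2 * Real.cosh x - Real.cosh α - Real.cosh β) /
      (Real.cosh β - Real.cosh α) ≠ 1 := by
    intro h; rw [div_eq_iff hd.ne'] at h; linarith
  refine ((Real.hasDerivAt_arcsin hne1 hne2).comp x hin).congr_deriv ?_
  have hP : 0 < (Real.cosh β - Real.cosh x) * (Real.cosh x - Real.cosh α) :=
    mul_pos (by linarith) (by linarith)
  have e : 1 - ((2 * Real.cosh x - Real.cosh α - Real.cosh β) /
      (Real.cosh β - Real.cosh α)) ^ 2 =
      (2 / (Real.cosh β - Real.cosh α)) ^ 2 *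
        ((Real.cosh β - Real.cosh x) * (Real.cosh x - Real.cosh α)) := by
    field_simp; ring
  rw [e, Real.sqrt_mul (sq_nonneg _), Real.sqrt_sq (by positivity), Real.rpow_neg hP.le,
    ← Real.sqrt_eq_rpow]
  have := Real.sqrt_pos.2 hP
  field_simp

lemma sinh_mul_rpow_nonneg {α β x : ℝ} (hα : 0 ≤ α) (hx : x ∈ Set.Ioo α β) :
    0 ≤ Real.sinh x *
      ((Real.cosh β - Real.cosh x) * (Real.cosh x - Real.cosh α)) ^ (-(1 / 2) : ℝ) := by
  have h1 : Real.cosh α ≤ Real.cosh x := by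
    rw [Real.cosh_le_cosh, abs_of_nonneg hα, abs_of_nonneg (by linarith [hx.1])]; exact hx.1.le
  have h2 : Real.cosh x ≤ Real.cosh β := by
    rw [Real.cosh_le_cosh, abs_of_nonneg (by linarith [hx.1]),
      abs_of_nonneg (by linarith [hx.1, hx.2])]
    exact hx.2.le
  exact mul_nonneg (Real.sinh_nonneg_iff.2 (by linarith [hx.1]))
    (Real.rpow_nonneg (mul_nonneg (by linarith) (by linarith)) _)

lemma integrableOn_sinh_arcsine {α β : ℝ} (hα : 0 ≤ α) :
    IntegrableOn (fun x => Real.sinh x *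
      ((Real.cosh β - Real.cosh x) * (Real.cosh x - Real.cosh α)) ^ (-(1 / 2) : ℝ))
      (Set.Ioo α β) := by
  refine (integrableOn_deriv_of_nonneg (Continuous.continuousOn ?_)
    (fun x hx => hasDerivAt_arcsin_cosh hα hx)
    (fun x hx => sinh_mul_rpow_nonneg hα hx)).mono_set Set.Ioo_subset_Ioc_self
  exact Real.continuous_arcsin.comp (by fun_prop)

lemma integral_sinh_arcsine {α β : ℝ} (hα : 0 ≤ α) (h : α < β) :
    ∫ x in Set.Ioo α β, Real.sinh x *
      ((Real.cosh β - Real.cosh x) * (Real.cosh x - Real.cosh α)) ^ (-(1 / 2) : ℝ) = Real.pi := by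
  have hd : Real.cosh β - Real.cosh α ≠ 0 := by
    have : Real.cosh α < Real.cosh β := by
      rw [Real.cosh_lt_cosh, abs_of_nonneg hα, abs_of_nonneg (by linarith)]; exact h
    linarith
  rw [← integral_Ioc_eq_integral_Ioo, ← intervalIntegral.integral_of_le h.le,
    integral_eq_sub_of_hasDerivAt_of_le h.le
      (Continuous.continuousOn (Real.continuous_arcsin.comp (by fun_prop)))
      (fun x hx => hasDerivAt_arcsin_cosh hα hx)
      ((intervalIntegrable_iff_integrableOn_Ioo_of_le h.le).2 (integrableOn_sinh_arcsine hα))]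
  have e1 : (2 * Real.cosh β - Real.cosh α - Real.cosh β) / (Real.cosh β - Real.cosh α) = 1 := by
    field_simp; ring
  have e2 : (2 * Real.cosh α - Real.cosh α - Real.cosh β) / (Real.cosh β - Real.cosh α) = -1 := by
    field_simp; ring
  simp only [Function.comp_def, e1, e2, Real.arcsin_one, Real.arcsin_neg]
  ring

lemma integrableOn_sinh_mul_rpow {t : ℝ} (ht : 0 < t) :
    IntegrableOn (fun s => Real.sinh s * (Real.cosh t - Real.cosh s) ^ (-(1 / 2) : ℝ))
      (Set.Ioo 0 t) := by
  have hlt : ∀ s ∈ Set.Ioo 0 t, 0 < Real.cosh t - Real.cosh s := fun s hs => by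
    rw [sub_pos, Real.cosh_lt_cosh, abs_of_pos hs.1, abs_of_pos ht]; exact hs.2
  refine (integrableOn_deriv_of_nonneg
    (g := fun s => -2 * Real.sqrt (Real.cosh t - Real.cosh s))
    (Continuous.continuousOn (by fun_prop)) (fun s hs => ?_) (fun s hs => ?_)).mono_set
      Set.Ioo_subset_Ioc_self
  · have h := (((Real.hasDerivAt_cosh s).const_sub (Real.cosh t)).sqrt (hlt s hs).ne').const_mul
      (-2 : ℝ)
    refine h.congr_deriv ?_
    rw [Real.rpow_neg (hlt s hs).le, ← Real.sqrt_eq_rpow]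
    have := Real.sqrt_pos.2 (hlt s hs)
    field_simp
  · exact mul_nonneg (Real.sinh_nonneg_iff.2 hs.1.le) (Real.rpow_nonneg (hlt s hs).le _)

/-- The symmetry of the Gram-type expression in the side lengths `r, s, l`. -/
lemma cosh_sub_mul_cosh_sub (r s l : ℝ) :
    (Real.cosh (r + s) - Real.cosh l) * (Real.cosh l - Real.cosh (r - s)) =
      (Real.cosh (r + l) - Real.cosh s) * (Real.cosh s - Real.cosh (r - l)) := by
  simp only [Real.cosh_add, Real.cosh_sub]
  have hr := Real.cosh_sq r
  have hs := Real.cosh_sq s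
  have hl := Real.cosh_sq l
  have es : Real.sinh s ^ 2 = Real.cosh s ^ 2 - 1 := by linarith
  have el : Real.sinh l ^ 2 = Real.cosh l ^ 2 - 1 := by linarith
  have er : Real.sinh r ^ 2 = Real.cosh r ^ 2 - 1 := by linarith
  ring_nf
  rw [es, el, er]
  ring

/-- The integrand of `Isol`. -/
noncomputable def isolIntegrand (t r : ℝ) (φ : ℝ → ℝ) (s l : ℝ) : ℝ :=
  φ l * Real.sinh l * Real.sinh s *
    ((Real.cosh t - Real.cosh s) * (Real.cosh (r + s) - Real.cosh l) *
      (Real.cosh l - Real.cosh (r - s))) ^ (-(1 / 2) : ℝ)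

/-- The open region of integration of `Isol`. -/
def isolRegion (t r : ℝ) : Set (ℝ × ℝ) :=
  {p | 0 < p.1 ∧ p.1 < t ∧ |r - p.1| < p.2 ∧ p.2 < r + p.1}

lemma measurableSet_isolRegion (t r : ℝ) : MeasurableSet (isolRegion t r) := by
  simp only [isolRegion, Set.ofPred_and]
  have h1 : MeasurableSet {p : ℝ × ℝ | 0 < p.1} :=
    measurableSet_lt measurable_const measurable_fst
  have h2 : MeasurableSet {p : ℝ × ℝ | p.1 < t} :=
    measurableSet_lt measurable_fst measurable_const
  have h3 : MeasurableSet {p : ℝ × ℝ | |r - p.1| < p.2} :=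
    (isOpen_lt (by fun_prop) (by fun_prop)).measurableSet
  have h4 : MeasurableSet {p : ℝ × ℝ | p.2 < r + p.1} :=
    measurableSet_lt (by fun_prop) (by fun_prop)
  exact h1.inter (h2.inter (h3.inter h4))

lemma isolIntegrand_eq {t r s l : ℝ} (φ : ℝ → ℝ) (hp : (s, l) ∈ isolRegion t r) :
    isolIntegrand t r φ s l =
      φ l * (Real.sinh s * (Real.cosh t - Real.cosh s) ^ (-(1 / 2) : ℝ)) *
        (Real.sinh l * ((Real.cosh (r + s) - Real.cosh l) *
          (Real.cosh l - Real.cosh |r - s|)) ^ (-(1 / 2) : ℝ)) := by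
  obtain ⟨h1, h2, h3, h4⟩ := hp
  simp only at h1 h2 h3 h4
  have hl : 0 < l := (abs_nonneg _).trans_lt h3
  have a1 : 0 ≤ Real.cosh t - Real.cosh s := by
    rw [sub_nonneg, Real.cosh_le_cosh, abs_of_pos h1, abs_of_pos (h1.trans h2)]; exact h2.le
  have a2 : 0 ≤ Real.cosh (r + s) - Real.cosh l := by
    rw [sub_nonneg, Real.cosh_le_cosh, abs_of_pos hl, abs_of_pos (hl.trans h4)]; exact h4.le
  have a3 : 0 ≤ Real.cosh l - Real.cosh (r - s) := by
    rw [sub_nonneg, Real.cosh_le_cosh, abs_of_pos hl]; exact h3.le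
  rw [isolIntegrand, Real.cosh_abs, mul_assoc (Real.cosh t - Real.cosh s),
    Real.mul_rpow a1 (mul_nonneg a2 a3)]
  ring

lemma isolIntegrand_nonneg {t r s l : ℝ} {φ : ℝ → ℝ} (hφ : ∀ x, 0 ≤ φ x)
    (hp : (s, l) ∈ isolRegion t r) : 0 ≤ isolIntegrand t r φ s l := by
  rw [isolIntegrand_eq φ hp]
  obtain ⟨h1, h2, h3, h4⟩ := hp
  have a1 : 0 ≤ Real.cosh t - Real.cosh s := by
    rw [sub_nonneg, Real.cosh_le_cosh, abs_of_pos h1, abs_of_pos (h1.trans h2)]; exact h2.le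
  exact mul_nonneg (mul_nonneg (hφ l)
    (mul_nonneg (Real.sinh_nonneg_iff.2 h1.le) (Real.rpow_nonneg a1 _)))
    (sinh_mul_rpow_nonneg (abs_nonneg _) ⟨h3, h4⟩)

lemma measurable_isolIntegrand {φ : ℝ → ℝ} (t r : ℝ) (hφ : Continuous φ) :
    Measurable (fun p : ℝ × ℝ => isolIntegrand t r φ p.1 p.2) := by
  unfold isolIntegrand
  refine Measurable.mul (Continuous.measurable (by fun_prop)) ?_
  exact (Continuous.measurable (by fun_prop)).pow_const _

/-- The slice of the region at fixed `s`. -/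
lemma indicator_isolRegion_left {t r s : ℝ} (hs : s ∈ Set.Ioo 0 t) (F : ℝ × ℝ → ℝ) :
    (fun l => (isolRegion t r).indicator F (s, l)) =
      (Set.Ioo |r - s| (r + s)).indicator (fun l => F (s, l)) := by
  ext l
  have : (s, l) ∈ isolRegion t r ↔ l ∈ Set.Ioo |r - s| (r + s) :=
    ⟨fun h => ⟨h.2.2.1, h.2.2.2⟩, fun h => ⟨hs.1, hs.2, h.1, h.2⟩⟩
  by_cases h : l ∈ Set.Ioo |r - s| (r + s)
  · rw [Set.indicator_of_mem h, Set.indicator_of_mem (this.2 h)]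
  · rw [Set.indicator_of_notMem h, Set.indicator_of_notMem (mt this.1 h)]

lemma indicator_isolRegion_left_of_notMem {t r s : ℝ} (hs : s ∉ Set.Ioo 0 t) (F : ℝ × ℝ → ℝ) :
    (fun l => (isolRegion t r).indicator F (s, l)) = fun _ => 0 := by
  ext l
  exact Set.indicator_of_notMem (fun h => hs ⟨h.1, h.2.1⟩) _

lemma isolIntegrand_le {t r s l M : ℝ} {φ : ℝ → ℝ} (hM : ∀ x ∈ Set.Icc 0 (r + t), φ x ≤ M)
    (hp : (s, l) ∈ isolRegion t r) :
    isolIntegrand t r φ s l ≤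
      M * (Real.sinh s * (Real.cosh t - Real.cosh s) ^ (-(1 / 2) : ℝ)) *
        (Real.sinh l * ((Real.cosh (r + s) - Real.cosh l) *
          (Real.cosh l - Real.cosh |r - s|)) ^ (-(1 / 2) : ℝ)) := by
  rw [isolIntegrand_eq φ hp]
  obtain ⟨h1, h2, h3, h4⟩ := hp
  simp only at h1 h2 h3 h4
  have a1 : 0 ≤ Real.cosh t - Real.cosh s := by
    rw [sub_nonneg, Real.cosh_le_cosh, abs_of_pos h1, abs_of_pos (h1.trans h2)]; exact h2.le
  exact mul_le_mul_of_nonneg_right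
    (mul_le_mul_of_nonneg_right (hM l ⟨(abs_nonneg _).trans h3.le, by linarith⟩)
      (mul_nonneg (Real.sinh_nonneg_iff.2 h1.le) (Real.rpow_nonneg a1 _)))
    (sinh_mul_rpow_nonneg (abs_nonneg _) ⟨h3, h4⟩)

lemma integrableOn_isolIntegrand_left {t r s M : ℝ} {φ : ℝ → ℝ} (hφc : Continuous φ)
    (hφ : ∀ x, 0 ≤ φ x) (hM : ∀ x ∈ Set.Icc 0 (r + t), φ x ≤ M) (hs : s ∈ Set.Ioo 0 t) :
    IntegrableOn (fun l => isolIntegrand t r φ s l) (Set.Ioo |r - s| (r + s)) := by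
  refine ((integrableOn_sinh_arcsine (abs_nonneg (r - s))).const_mul
    (M * (Real.sinh s * (Real.cosh t - Real.cosh s) ^ (-(1 / 2) : ℝ)))).mono'
    ((measurable_isolIntegrand t r hφc).comp measurable_prodMk_left).aestronglyMeasurable ?_
  filter_upwards [ae_restrict_mem measurableSet_Ioo] with l hl
  have hp : (s, l) ∈ isolRegion t r := ⟨hs.1, hs.2, hl.1, hl.2⟩
  rw [Real.norm_of_nonneg (isolIntegrand_nonneg hφ hp)]
  exact isolIntegrand_le hM hp

lemma integrable_indicator_isolIntegrand {t r : ℝ} {φ : ℝ → ℝ} (hφc : Continuous φ)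
    (hφ : ∀ x, 0 ≤ φ x) (ht : 0 < t) (hr : 0 < r) :
    Integrable ((isolRegion t r).indicator fun p => isolIntegrand t r φ p.1 p.2)
      ((volume : Measure ℝ).prod volume) := by
  obtain ⟨M, hM⟩ : ∃ M, ∀ x ∈ Set.Icc 0 (r + t), φ x ≤ M := by
    obtain ⟨M, hM⟩ := isCompact_Icc.bddAbove_image (hφc.continuousOn (s := Set.Icc 0 (r + t)))
    exact ⟨M, fun x hx => hM ⟨x, hx, rfl⟩⟩
  have hmeas := ((measurable_isolIntegrand t r hφc).indicator
    (measurableSet_isolRegion t r)).aestronglyMeasurable (μ := (volume : Measure ℝ).prod volume)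
  refine (integrable_prod_iff hmeas).2 ⟨Filter.Eventually.of_forall fun s => ?_, ?_⟩
  · by_cases hs : s ∈ Set.Ioo 0 t
    · rw [indicator_isolRegion_left hs, integrable_indicator_iff measurableSet_Ioo]
      exact integrableOn_isolIntegrand_left hφc hφ hM hs
    · rw [indicator_isolRegion_left_of_notMem hs]
      exact integrable_zero _ _ _
  · refine (((integrable_indicator_iff measurableSet_Ioo).2
      ((integrableOn_sinh_mul_rpow ht).const_mul (M * Real.pi)))).mono' hmeas.norm.integral_prod_right'
      (Filter.Eventually.of_forall fun s => ?_)
    rw [Real.norm_of_nonneg (integral_nonneg fun l => norm_nonneg _)]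
    by_cases hs : s ∈ Set.Ioo 0 t
    · have hnn : ∀ l, ‖(isolRegion t r).indicator (fun p => isolIntegrand t r φ p.1 p.2) (s, l)‖ =
          (isolRegion t r).indicator (fun p => isolIntegrand t r φ p.1 p.2) (s, l) := fun l =>
        Real.norm_of_nonneg (Set.indicator_nonneg (fun p hp => isolIntegrand_nonneg hφ hp) _)
      simp only [hnn]
      rw [indicator_isolRegion_left hs, Set.indicator_of_mem hs,
        MeasureTheory.integral_indicator measurableSet_Ioo]
      have hlt : |r - s| < r + s := abs_lt.2 ⟨by linarith, by linarith [hs.1]⟩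
      calc ∫ l in Set.Ioo |r - s| (r + s), isolIntegrand t r φ s l
          ≤ ∫ l in Set.Ioo |r - s| (r + s),
              M * (Real.sinh s * (Real.cosh t - Real.cosh s) ^ (-(1 / 2) : ℝ)) *
              (Real.sinh l * ((Real.cosh (r + s) - Real.cosh l) *
                (Real.cosh l - Real.cosh |r - s|)) ^ (-(1 / 2) : ℝ)) :=
            setIntegral_mono_on (integrableOn_isolIntegrand_left hφc hφ hM hs)
              ((integrableOn_sinh_arcsine (abs_nonneg (r - s))).const_mul _) measurableSet_Ioo
              fun l hl => isolIntegrand_le hM ⟨hs.1, hs.2, hl.1, hl.2⟩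
        _ = _ := by
            rw [MeasureTheory.integral_const_mul, integral_sinh_arcsine (abs_nonneg _) hlt]
            ring
    · have h0 := fun l => congrFun (indicator_isolRegion_left_of_notMem (r := r) hs
        fun p => isolIntegrand t r φ p.1 p.2) l
      simp [h0, Set.indicator_of_notMem hs]

lemma Isol_eq_integral_indicator {t r : ℝ} (φ : ℝ → ℝ) (ht : 0 < t) (hr : 0 < r) :
    Isol t r φ = (1 / (Real.pi * Real.sqrt 2)) * ∫ s, ∫ l,
      (isolRegion t r).indicator (fun p => isolIntegrand t r φ p.1 p.2) (s, l) := by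
  rw [Isol]
  congr 1
  rw [intervalIntegral.integral_of_le ht.le, integral_Ioc_eq_integral_Ioo,
    ← MeasureTheory.integral_indicator measurableSet_Ioo]
  congr 1
  ext s
  by_cases hs : s ∈ Set.Ioo 0 t
  · have hlt : |r - s| < r + s := abs_lt.2 ⟨by linarith, by linarith [hs.1]⟩
    rw [Set.indicator_of_mem hs, indicator_isolRegion_left hs,
      MeasureTheory.integral_indicator measurableSet_Ioo, ← integral_Ioc_eq_integral_Ioo,
      ← intervalIntegral.integral_of_le hlt.le]
    rfl
  · rw [Set.indicator_of_notMem hs, indicator_isolRegion_left_of_notMem hs]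
    simp

/-- Bounding `cosh (r + l) - cosh s` by `cosh (r + l)` reduces the kernel to an arcsine density. -/
lemma le_isolIntegrand {t r s l : ℝ} {φ : ℝ → ℝ} (hφ : ∀ x, 0 ≤ φ x)
    (hl : |r - t| < l) (hr : 0 < r) (hs : s ∈ Set.Ioo |r - l| t) :
    φ l * Real.sinh l * Real.cosh (r + l) ^ (-(1 / 2) : ℝ) *
        (Real.sinh s * ((Real.cosh t - Real.cosh s) *
          (Real.cosh s - Real.cosh |r - l|)) ^ (-(1 / 2) : ℝ)) ≤
      isolIntegrand t r φ s l := by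
  have hl0 : 0 < l := (abs_nonneg _).trans_lt hl
  have hs0 : 0 < s := (abs_nonneg _).trans_lt hs.1
  have hlt := (abs_lt.1 hl).1
  have a1 : 0 < Real.cosh t - Real.cosh s := by
    rw [sub_pos, Real.cosh_lt_cosh, abs_of_pos hs0, abs_of_pos (hs0.trans hs.2)]; exact hs.2
  have a2 : 0 < Real.cosh (r + l) - Real.cosh s := by
    rw [sub_pos, Real.cosh_lt_cosh, abs_of_pos hs0, abs_of_pos (by linarith)]
    linarith [hs.2]
  have a3 : 0 < Real.cosh s - Real.cosh |r - l| := by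
    rw [sub_pos, Real.cosh_abs, Real.cosh_lt_cosh, abs_of_pos hs0]; exact hs.1
  have key : Real.cosh (r + l) ^ (-(1 / 2) : ℝ) ≤
      (Real.cosh (r + l) - Real.cosh s) ^ (-(1 / 2) : ℝ) :=
    Real.rpow_le_rpow_of_nonpos a2 (by linarith [Real.cosh_pos s]) (by norm_num)
  have e : (Real.cosh t - Real.cosh s) * (Real.cosh (r + s) - Real.cosh l) *
      (Real.cosh l - Real.cosh (r - s)) = (Real.cosh (r + l) - Real.cosh s) *
      ((Real.cosh t - Real.cosh s) * (Real.cosh s - Real.cosh |r - l|)) := by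
    rw [mul_assoc, cosh_sub_mul_cosh_sub, Real.cosh_abs]; ring
  rw [isolIntegrand, e, Real.mul_rpow a2.le (mul_pos a1 a3).le]
  calc _ = φ l * Real.sinh l * Real.sinh s * (Real.cosh (r + l) ^ (-(1 / 2) : ℝ) *
        ((Real.cosh t - Real.cosh s) * (Real.cosh s - Real.cosh |r - l|)) ^ (-(1 / 2) : ℝ)) := by
        ring
    _ ≤ _ := by
        refine mul_le_mul_of_nonneg_left (mul_le_mul_of_nonneg_right key
          (Real.rpow_nonneg (mul_pos a1 a3).le _)) ?_
        exact mul_nonneg (mul_nonneg (hφ l) (Real.sinh_nonneg_iff.2 hl0.le))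
          (Real.sinh_nonneg_iff.2 hs0.le)

/-- Lower bound for the kernel obtained after integrating in `s` first. -/
lemma le_integral_indicator_isolIntegrand {t r l : ℝ} {φ : ℝ → ℝ} (hφ : ∀ x, 0 ≤ φ x)
    (hr : 0 < r) (hl : l ∈ Set.Ioo |r - t| (r + t))
    (hint : Integrable fun s =>
      (isolRegion t r).indicator (fun p => isolIntegrand t r φ p.1 p.2) (s, l)) :
    φ l * Real.sinh l * Real.cosh (r + l) ^ (-(1 / 2) : ℝ) * Real.pi ≤
      ∫ s, (isolRegion t r).indicator (fun p => isolIntegrand t r φ p.1 p.2) (s, l) := by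
  have hlt := abs_lt.1 hl.1
  have hrl : |r - l| < t := abs_lt.2 ⟨by linarith [hl.2], by linarith⟩
  rw [← integral_sinh_arcsine (abs_nonneg (r - l)) hrl, ← MeasureTheory.integral_const_mul,
    ← MeasureTheory.integral_indicator measurableSet_Ioo]
  refine MeasureTheory.integral_mono ((integrable_indicator_iff measurableSet_Ioo).2
    ((integrableOn_sinh_arcsine (abs_nonneg _)).const_mul _)) hint fun s => ?_
  by_cases hs : s ∈ Set.Ioo |r - l| t
  · have h1 := abs_lt.1 hs.1
    have hp : (s, l) ∈ isolRegion t r :=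
      ⟨(abs_nonneg _).trans_lt hs.1, hs.2, abs_lt.2 ⟨by linarith [hs.2], by linarith⟩,
        by linarith⟩
    simp only [Set.indicator_of_mem hs, Set.indicator_of_mem hp]
    exact le_isolIntegrand hφ hl.1 hr hs
  · simp only [Set.indicator_of_notMem hs]
    exact Set.indicator_nonneg (fun p hp => isolIntegrand_nonneg hφ hp) _

/-- The lower bound for data continuous and nonnegative on the whole line. -/
lemma linear_solution_lower_bound_of_continuous {φ : ℝ → ℝ} (hφc : Continuous φ)
    (hφ : ∀ x, 0 ≤ φ x) {t r : ℝ} (ht : 0 < t) (hr : 0 < r) :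
    ∫ l in |r - t|..(r + t), φ l * Real.sinh l * (2 * Real.cosh (r + l)) ^ (-(1 / 2) : ℝ) ≤
      Isol t r φ := by
  have hG := integrable_indicator_isolIntegrand hφc hφ ht hr
  have hlt : |r - t| < r + t := abs_lt.2 ⟨by linarith, by linarith⟩
  have hc : 0 < 1 / (Real.pi * Real.sqrt 2) := by positivity
  have hconst : ∀ l, φ l * Real.sinh l * (2 * Real.cosh (r + l)) ^ (-(1 / 2) : ℝ) =
      1 / (Real.pi * Real.sqrt 2) *
        (φ l * Real.sinh l * Real.cosh (r + l) ^ (-(1 / 2) : ℝ) * Real.pi) := fun l => by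
    rw [Real.mul_rpow (by norm_num) (Real.cosh_pos _).le, Real.rpow_neg (by norm_num : (0 : ℝ) ≤ 2),
      ← Real.sqrt_eq_rpow]
    field_simp
  have hcont : Continuous fun l =>
      φ l * Real.sinh l * Real.cosh (r + l) ^ (-(1 / 2) : ℝ) * Real.pi := by
    refine Continuous.mul (Continuous.mul (by fun_prop) ?_) continuous_const
    exact Continuous.rpow_const (by fun_prop) fun l => Or.inl (Real.cosh_pos _).ne'
  rw [Isol_eq_integral_indicator φ ht hr, integral_integral_swap (f := fun s l =>
    (isolRegion t r).indicator (fun p => isolIntegrand t r φ p.1 p.2) (s, l)) hG]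
  simp only [hconst]
  rw [intervalIntegral.integral_const_mul]
  refine mul_le_mul_of_nonneg_left ?_ hc.le
  rw [intervalIntegral.integral_of_le hlt.le, integral_Ioc_eq_integral_Ioo,
    ← MeasureTheory.integral_indicator measurableSet_Ioo]
  refine integral_mono_ae ((hcont.integrableOn_Icc.mono_set
    Set.Ioo_subset_Icc_self).integrable_indicator measurableSet_Ioo) hG.integral_prod_right ?_
  filter_upwards [hG.prod_left_ae] with l hl
  by_cases h : l ∈ Set.Ioo |r - t| (r + t)
  · rw [Set.indicator_of_mem h]
    exact le_integral_indicator_isolIntegrand hφ hr h hl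
  · rw [Set.indicator_of_notMem h]
    exact integral_nonneg fun s =>
      Set.indicator_nonneg (fun p hp => isolIntegrand_nonneg hφ hp) _

theorem linear_solution_lower_bound (φ : ℝ → ℝ)
    (hφc : ContinuousOn φ (Set.Ici 0))
    (hφnn : ∀ x ∈ Set.Ici (0 : ℝ), 0 ≤ φ x)
    (t r : ℝ) (ht : 0 < t) (hr : 0 < r) :
    Isol t r φ ≥
      ∫ l in |r - t|..(r + t),
        φ l * Real.sinh l * (2 * Real.cosh (r + l)) ^ (-(1 / 2) : ℝ) := by
  have hψc : Continuous fun x => φ (max x 0) :=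
    hφc.comp_continuous (by fun_prop) fun x => le_max_right x 0
  have hψ : ∀ x, 0 ≤ φ (max x 0) := fun x => hφnn _ (le_max_right x 0)
  have heq : ∀ {s l : ℝ}, 0 ≤ s → l ∈ Set.uIcc |r - s| (r + s) → φ (max l 0) = φ l := by
    intro s l hs hl
    have h0 : 0 ≤ min |r - s| (r + s) := le_min (abs_nonneg _) (by linarith)
    rw [max_eq_left (h0.trans hl.1)]
  have hI : Isol t r (fun x => φ (max x 0)) = Isol t r φ := by
    unfold Isol
    congr 1
    refine intervalIntegral.integral_congr fun s hs => ?_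
    rw [Set.uIcc_of_le ht.le] at hs
    refine intervalIntegral.integral_congr fun l hl => ?_
    simp only [heq hs.1 hl]
  have hR : ∫ l in |r - t|..(r + t),
        φ (max l 0) * Real.sinh l * (2 * Real.cosh (r + l)) ^ (-(1 / 2) : ℝ) =
      ∫ l in |r - t|..(r + t),
        φ l * Real.sinh l * (2 * Real.cosh (r + l)) ^ (-(1 / 2) : ℝ) := by
    refine intervalIntegral.integral_congr fun l hl => ?_
    simp only [heq ht.le hl]
  rw [← hI, ← hR]
  exact linear_solution_lower_bound_of_continuous hψc hψ ht hr
end
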